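/- arXiv:math/0005279 — 2 statements merged into one kernel-verified Lean document; each statement's English description precedes it below -/
import Mathlib

section
/- Let d ≥ 1, δ > 0 and ρ > 0. There exists a constant C < ∞ (depending only on d, δ and ρ) such that for every y ∈ ℝ^d and every smooth function f : ℝ^d → ℂ all of whose derivatives are bounded, ρ ∫ φ_{δ,y}(x) |∇f(x)|² dx ≤ ∫ φ_{δ,y}(x) |Δf(x)|² dx + C ∫ φ_{δ,y}(x) |f(x)|² dx. -/
/-- The weight function `φ_{δ,y}(x) = exp(−√(1+δ²|x−y|²))` on `ℝ^d`. -/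
noncomputable def phi (d : ℕ) (δ : ℝ) (y x : EuclideanSpace ℝ (Fin d)) : ℝ :=
  Real.exp (-Real.sqrt (1 + δ ^ 2 * ‖x - y‖ ^ 2))

/-- The Laplacian `Δf(x) = Σ_j ∂²_j f(x)` of `f : ℝ^d → ℂ`, via the second iterated
Fréchet derivative evaluated on coordinate directions. -/
noncomputable def lap (d : ℕ) (f : EuclideanSpace ℝ (Fin d) → ℂ)
    (x : EuclideanSpace ℝ (Fin d)) : ℂ :=
  ∑ j : Fin d, iteratedFDeriv ℝ 2 f x
    ![EuclideanSpace.single j (1 : ℝ), EuclideanSpace.single j (1 : ℝ)]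

/-- `|∇f(x)|² = Σ_j |∂_j f(x)|²`. -/
noncomputable def gradSq (d : ℕ) (f : EuclideanSpace ℝ (Fin d) → ℂ)
    (x : EuclideanSpace ℝ (Fin d)) : ℝ :=
  ∑ j : Fin d, ‖fderiv ℝ f x (EuclideanSpace.single j (1 : ℝ))‖ ^ 2

/-!
Integrating `∂ᵢ(w ⟨f, ∂ᵢf⟩)` over the whole space and summing over `i` gives
`∫ w |∇f|² = -∫ w ⟨f, Δf⟩ - ∫ ⟨f, ∇w · ∇f⟩`. When `|∇w| ≤ K w`, the drift term is at most
`½ ∫ w |∇f|² + ½ K² ∫ w |f|²`, whose first part is absorbed on the left, while the first term is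
split by Young's inequality with the parameter `ρ`. Cauchy–Schwarz on the full gradient, rather than
direction by direction, makes the resulting constant `ρ K² + ρ²` independent of the dimension. The
weight `φ_{δ,y}` satisfies `|∇φ| ≤ δ φ` uniformly in `y`.
-/

open MeasureTheory Module
open scoped Laplacian InnerProductSpace

section WeightedIntegrability

variable {α G H : Type*} [MeasurableSpace α] {μ : Measure α} {w : α → ℝ}
  [NormedAddCommGroup G] [NormedAddCommGroup H]

lemma integrable_mul_norm_sq_of_bounded (hw : Integrable w μ) {g : α → G}
    (hg : AEStronglyMeasurable g μ) {B : ℝ} (hB : ∀ x, ‖g x‖ ≤ B) :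
    Integrable (fun x => w x * ‖g x‖ ^ 2) μ :=
  hw.mul_bdd (c := B ^ 2) (hg.norm.pow 2) <| .of_forall fun x => by
    simpa only [norm_pow, norm_norm] using pow_le_pow_left₀ (norm_nonneg _) (hB x) 2

lemma integrable_mul_norm_sq_of_norm_le (hw_nonneg : ∀ x, 0 ≤ w x)
    (hw : AEStronglyMeasurable w μ) {g : α → G} {h : α → H} {c : ℝ}
    (hg : Integrable (fun x => w x * ‖g x‖ ^ 2) μ) (hh : AEStronglyMeasurable h μ)
    (hle : ∀ x, ‖h x‖ ≤ c * ‖g x‖) :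
    Integrable (fun x => w x * ‖h x‖ ^ 2) μ := by
  refine (hg.const_mul (c ^ 2)).mono' (hw.mul (hh.norm.pow 2)) (.of_forall fun x => ?_)
  have hw_x := hw_nonneg x
  rw [Real.norm_of_nonneg (by positivity)]
  calc w x * ‖h x‖ ^ 2 ≤ w x * (c * ‖g x‖) ^ 2 := by gcongr; exact hle x
    _ = c ^ 2 * (w x * ‖g x‖ ^ 2) := by ring

lemma integrable_mul_inner_of_abs_le [InnerProductSpace ℝ G] {a : α → ℝ} {K : ℝ}
    (ha : AEStronglyMeasurable a μ) (haw : ∀ x, |a x| ≤ K * w x) {g h : α → G}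
    (hg : AEStronglyMeasurable g μ) (hh : AEStronglyMeasurable h μ)
    (hwg : Integrable (fun x => w x * ‖g x‖ ^ 2) μ)
    (hwh : Integrable (fun x => w x * ‖h x‖ ^ 2) μ) :
    Integrable (fun x => a x * ⟪g x, h x⟫_ℝ) μ := by
  refine ((hwg.add hwh).const_mul (K / 2)).mono' (ha.mul (hg.inner hh)) (.of_forall fun x => ?_)
  have hKw : 0 ≤ K * w x := (abs_nonneg _).trans (haw x)
  rw [norm_mul, Real.norm_eq_abs]
  calc |a x| * ‖⟪g x, h x⟫_ℝ‖ ≤ K * w x * (‖g x‖ * ‖h x‖) :=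
        mul_le_mul (haw x) (norm_inner_le_norm _ _) (norm_nonneg _) hKw
    _ ≤ K * w x * ((‖g x‖ ^ 2 + ‖h x‖ ^ 2) / 2) := by
        gcongr
        linarith [two_mul_le_add_sq ‖g x‖ ‖h x‖]
    _ = K / 2 * (w x * ‖g x‖ ^ 2 + w x * ‖h x‖ ^ 2) := by ring

end WeightedIntegrability

section PointwiseEstimates

variable {E F ι : Type*} [NormedAddCommGroup E] [InnerProductSpace ℝ E]
  [NormedAddCommGroup F] [InnerProductSpace ℝ F] [Fintype ι]

lemma neg_two_mul_inner_le_norm_sq_add (ρ : ℝ) (u v : F) :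
    -(2 * ρ * ⟪u, v⟫_ℝ) ≤ ‖v‖ ^ 2 + ρ ^ 2 * ‖u‖ ^ 2 := by
  have hsq : ‖v + ρ • u‖ ^ 2 = ‖v‖ ^ 2 + 2 * ρ * ⟪u, v⟫_ℝ + ρ ^ 2 * ‖u‖ ^ 2 := by
    rw [norm_add_sq_real, real_inner_smul_right, real_inner_comm, norm_smul, mul_pow,
      Real.norm_eq_abs, sq_abs]
    ring
  linarith [sq_nonneg ‖v + ρ • u‖]

lemma sq_sum_apply_mul_inner_le (b : OrthonormalBasis ι ℝ E) (L : StrongDual ℝ E) (u : F)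
    (v : ι → F) :
    (∑ i, L (b i) * ⟪u, v i⟫_ℝ) ^ 2 ≤ ‖L‖ ^ 2 * (‖u‖ ^ 2 * ∑ i, ‖v i‖ ^ 2) := by
  have hinner (i : ι) : ⟪u, v i⟫_ℝ ^ 2 ≤ ‖u‖ ^ 2 * ‖v i‖ ^ 2 := by
    rw [← mul_pow]
    exact sq_le_sq.2 ((abs_real_inner_le_norm _ _).trans (le_abs_self _))
  calc (∑ i, L (b i) * ⟪u, v i⟫_ℝ) ^ 2 ≤ (∑ i, L (b i) ^ 2) * ∑ i, ⟪u, v i⟫_ℝ ^ 2 :=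
        Finset.sum_mul_sq_le_sq_mul_sq _ _ _
    _ ≤ (∑ i, L (b i) ^ 2) * ∑ i, ‖u‖ ^ 2 * ‖v i‖ ^ 2 := by
        gcongr with i
        exact hinner i
    _ = ‖L‖ ^ 2 * (‖u‖ ^ 2 * ∑ i, ‖v i‖ ^ 2) := by rw [b.norm_dual, ← Finset.mul_sum]

lemma two_mul_abs_sum_apply_mul_inner_le (b : OrthonormalBasis ι ℝ E) {L : StrongDual ℝ E}
    {K t : ℝ} (ht : 0 ≤ t) (hL : ‖L‖ ≤ K * t) (u : F) (v : ι → F) :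
    2 * |∑ i, L (b i) * ⟪u, v i⟫_ℝ| ≤ t * ∑ i, ‖v i‖ ^ 2 + K ^ 2 * (t * ‖u‖ ^ 2) := by
  rw [← abs_two, ← abs_mul]
  refine abs_le_of_sq_le_sq ?_ (by positivity)
  calc (2 * ∑ i, L (b i) * ⟪u, v i⟫_ℝ) ^ 2 = 4 * (∑ i, L (b i) * ⟪u, v i⟫_ℝ) ^ 2 := by ring
    _ ≤ 4 * (‖L‖ ^ 2 * (‖u‖ ^ 2 * ∑ i, ‖v i‖ ^ 2)) := by
        gcongr
        exact sq_sum_apply_mul_inner_le b L u v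
    _ ≤ 4 * ((K * t) ^ 2 * (‖u‖ ^ 2 * ∑ i, ‖v i‖ ^ 2)) := by gcongr
    _ = 4 * (t * ∑ i, ‖v i‖ ^ 2) * (K ^ 2 * (t * ‖u‖ ^ 2)) := by ring
    _ ≤ (t * ∑ i, ‖v i‖ ^ 2 + K ^ 2 * (t * ‖u‖ ^ 2)) ^ 2 := four_mul_le_sq_add _ _

end PointwiseEstimates

section Derivatives

variable {E F : Type*} [NormedAddCommGroup E] [NormedAddCommGroup F] [NormedSpace ℝ F]

section NormedDomain

variable [NormedSpace ℝ E]

lemma continuous_fderiv_apply_const {f : E → F} {n : WithTop ℕ∞} (hf : ContDiff ℝ n f) (hn : n ≠ 0)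
    (v : E) : Continuous fun x => fderiv ℝ f x v :=
  (hf.continuous_fderiv hn).clm_apply continuous_const

lemma continuous_iteratedFDeriv_apply_const {f : E → F} {n : WithTop ℕ∞} {k : ℕ}
    (hf : ContDiff ℝ n f) (hk : k ≤ n) (m : Fin k → E) :
    Continuous fun x => iteratedFDeriv ℝ k f x m :=
  (hf.continuous_iteratedFDeriv hk).eval_const m

end NormedDomain

section Laplacian

variable [InnerProductSpace ℝ E] [FiniteDimensional ℝ E]

lemma norm_laplacian_le (f : E → F) (x : E) :
    ‖(Δ f) x‖ ≤ finrank ℝ E * ‖iteratedFDeriv ℝ 2 f x‖ := by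
  rw [InnerProductSpace.laplacian_eq_iteratedFDeriv_stdOrthonormalBasis]
  refine (norm_sum_le_of_le (n := fun _ => ‖iteratedFDeriv ℝ 2 f x‖) _ fun i _ => ?_).trans
    (by simp)
  simpa [Fin.prod_univ_two] using (iteratedFDeriv ℝ 2 f x).le_opNorm
    ![stdOrthonormalBasis ℝ E i, stdOrthonormalBasis ℝ E i]

lemma continuous_laplacian {f : E → F} (hf : ContDiff ℝ 2 f) : Continuous (Δ f) := by
  rw [InnerProductSpace.laplacian_eq_iteratedFDeriv_stdOrthonormalBasis]
  exact continuous_finsetSum _ fun i _ => continuous_iteratedFDeriv_apply_const hf le_rfl _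

end Laplacian

end Derivatives

section InnerProductCodomain

variable {E F : Type*} [NormedAddCommGroup E] [NormedSpace ℝ E] [NormedAddCommGroup F]
  [InnerProductSpace ℝ F]

lemma differentiable_inner_fderiv_apply {f : E → F} (hf : ContDiff ℝ 2 f) (v : E) :
    Differentiable ℝ fun x => ⟪f x, fderiv ℝ f x v⟫_ℝ :=
  (hf.differentiable two_ne_zero).inner ℝ
    (((hf.fderiv_right (m := 1) le_rfl).differentiable one_ne_zero).clm_apply
      (differentiable_const v))

lemma fderiv_inner_fderiv_apply {f : E → F} (hf : ContDiff ℝ 2 f) (x v : E) :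
    fderiv ℝ (fun x => ⟪f x, fderiv ℝ f x v⟫_ℝ) x v =
      ⟪f x, iteratedFDeriv ℝ 2 f x ![v, v]⟫_ℝ + ‖fderiv ℝ f x v‖ ^ 2 := by
  have hf_diff : DifferentiableAt ℝ f x := hf.differentiable two_ne_zero x
  have hDf : DifferentiableAt ℝ (fderiv ℝ f) x :=
    (hf.fderiv_right (m := 1) le_rfl).differentiable one_ne_zero x
  rw [fderiv_inner_apply ℝ hf_diff (hDf.clm_apply (differentiableAt_const v)),
    fderiv_clm_apply hDf (differentiableAt_const v), real_inner_self_eq_norm_sq]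
  simp [iteratedFDeriv_two_apply]

end InnerProductCodomain

section WeightedSobolev

variable {E F : Type*} [NormedAddCommGroup E] [NormedSpace ℝ E] [NormedAddCommGroup F]
  [NormedSpace ℝ F]

/-- A weight `w ≥ 0` with `|∇w| ≤ K w`, which for `w > 0` says that `log w` is `K`-Lipschitz. This
is the only property of the weight that the integration by parts uses. -/
structure IsLogLipschitzWeight (K : ℝ) (w : E → ℝ) : Prop where
  nonneg : ∀ x, 0 ≤ w x
  differentiable : Differentiable ℝ w
  norm_fderiv_le : ∀ x, ‖fderiv ℝ w x‖ ≤ K * w x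

/-- The `C²` functions in the weighted Sobolev space `W^{2,2}(w dμ)`: those whose derivatives of
order at most two are square integrable against `w dμ`. Requiring `f` to be `C²` avoids weak
derivatives. -/
structure MemWeightedSobolevTwo [MeasurableSpace E] (μ : Measure E) (w : E → ℝ) (f : E → F) :
    Prop where
  contDiff : ContDiff ℝ 2 f
  integrable_iteratedFDeriv :
    ∀ n ≤ 2, Integrable (fun x => w x * ‖iteratedFDeriv ℝ n f x‖ ^ 2) μ

variable {K : ℝ} {w : E → ℝ} {f : E → F}

lemma IsLogLipschitzWeight.abs_fderiv_apply_le (hw : IsLogLipschitzWeight K w) (x v : E) :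
    |fderiv ℝ w x v| ≤ K * ‖v‖ * w x := by
  calc |fderiv ℝ w x v| ≤ ‖fderiv ℝ w x‖ * ‖v‖ := (fderiv ℝ w x).le_opNorm v
    _ ≤ K * w x * ‖v‖ := by gcongr; exact hw.norm_fderiv_le x
    _ = K * ‖v‖ * w x := by ring

variable [MeasurableSpace E] {μ : Measure E}

lemma MemWeightedSobolevTwo.integrable_mul_norm_sq (hf : MemWeightedSobolevTwo μ w f) :
    Integrable (fun x => w x * ‖f x‖ ^ 2) μ := by
  simpa only [norm_iteratedFDeriv_zero] using hf.integrable_iteratedFDeriv 0 zero_le_two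

variable [BorelSpace E]

lemma IsLogLipschitzWeight.aestronglyMeasurable (hw : IsLogLipschitzWeight K w) :
    AEStronglyMeasurable w μ :=
  hw.differentiable.continuous.aestronglyMeasurable

variable [FiniteDimensional ℝ E]

namespace MemWeightedSobolevTwo

lemma of_bounded (hw : Integrable w μ) (hf : ContDiff ℝ 2 f)
    (hbound : ∀ n ≤ 2, ∃ B : ℝ, ∀ x, ‖iteratedFDeriv ℝ n f x‖ ≤ B) :
    MemWeightedSobolevTwo μ w f where
  contDiff := hf
  integrable_iteratedFDeriv n hn :=
    (hbound n hn).elim fun _ hB => integrable_mul_norm_sq_of_bounded hw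
      (hf.continuous_iteratedFDeriv (mod_cast hn)).aestronglyMeasurable hB

lemma integrable_mul_norm_iteratedFDeriv_apply_sq (hf : MemWeightedSobolevTwo μ w f)
    (hw : IsLogLipschitzWeight K w) {n : ℕ} (hn : n ≤ 2) (m : Fin n → E) :
    Integrable (fun x => w x * ‖iteratedFDeriv ℝ n f x m‖ ^ 2) μ :=
  integrable_mul_norm_sq_of_norm_le (c := ∏ i, ‖m i‖) hw.nonneg hw.aestronglyMeasurable
    (hf.integrable_iteratedFDeriv n hn)
    (continuous_iteratedFDeriv_apply_const hf.contDiff (mod_cast hn) m).aestronglyMeasurable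
    fun x => by
      rw [mul_comm]
      exact (iteratedFDeriv ℝ n f x).le_opNorm m

lemma integrable_mul_norm_fderiv_apply_sq (hf : MemWeightedSobolevTwo μ w f)
    (hw : IsLogLipschitzWeight K w) (v : E) :
    Integrable (fun x => w x * ‖fderiv ℝ f x v‖ ^ 2) μ := by
  simpa only [iteratedFDeriv_one_apply] using
    hf.integrable_mul_norm_iteratedFDeriv_apply_sq hw one_le_two fun _ => v

end MemWeightedSobolevTwo

end WeightedSobolev

namespace MemWeightedSobolevTwo

section Directional

variable {E F : Type*} [NormedAddCommGroup E] [NormedSpace ℝ E] [FiniteDimensional ℝ E]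
  [MeasurableSpace E] [BorelSpace E] [NormedAddCommGroup F] [InnerProductSpace ℝ F]
  {μ : Measure E} {K : ℝ} {w : E → ℝ} {f : E → F}

lemma integrable_mul_inner (hf : MemWeightedSobolevTwo μ w f) (hw : IsLogLipschitzWeight K w)
    {g : E → F} (hg : Continuous g) (hwg : Integrable (fun x => w x * ‖g x‖ ^ 2) μ) :
    Integrable (fun x => w x * ⟪f x, g x⟫_ℝ) μ :=
  integrable_mul_inner_of_abs_le (K := 1) hw.aestronglyMeasurable
    (fun x => by rw [abs_of_nonneg (hw.nonneg x), one_mul])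
    hf.contDiff.continuous.aestronglyMeasurable hg.aestronglyMeasurable
    hf.integrable_mul_norm_sq hwg

lemma integrable_fderiv_mul_inner_fderiv (hf : MemWeightedSobolevTwo μ w f)
    (hw : IsLogLipschitzWeight K w) (v : E) :
    Integrable (fun x => fderiv ℝ w x v * ⟪f x, fderiv ℝ f x v⟫_ℝ) μ :=
  integrable_mul_inner_of_abs_le (measurable_fderiv_apply_const ℝ w v).aestronglyMeasurable
    (fun x => hw.abs_fderiv_apply_le x v) hf.contDiff.continuous.aestronglyMeasurable
    (continuous_fderiv_apply_const hf.contDiff two_ne_zero v).aestronglyMeasurable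
    hf.integrable_mul_norm_sq (hf.integrable_mul_norm_fderiv_apply_sq hw v)

lemma integrable_mul_inner_iteratedFDeriv_two (hf : MemWeightedSobolevTwo μ w f)
    (hw : IsLogLipschitzWeight K w) (v : E) :
    Integrable (fun x => w x * ⟪f x, iteratedFDeriv ℝ 2 f x ![v, v]⟫_ℝ) μ :=
  hf.integrable_mul_inner hw (continuous_iteratedFDeriv_apply_const hf.contDiff le_rfl _)
    (hf.integrable_mul_norm_iteratedFDeriv_apply_sq hw le_rfl _)

lemma integral_mul_norm_fderiv_apply_sq_add [μ.IsAddHaarMeasure]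
    (hf : MemWeightedSobolevTwo μ w f) (hw : IsLogLipschitzWeight K w) (v : E) :
    ∫ x, w x * ‖fderiv ℝ f x v‖ ^ 2 ∂μ + ∫ x, w x * ⟪f x, iteratedFDeriv ℝ 2 f x ![v, v]⟫_ℝ ∂μ =
      -∫ x, fderiv ℝ w x v * ⟪f x, fderiv ℝ f x v⟫_ℝ ∂μ := by
  have int_second := hf.integrable_mul_inner_iteratedFDeriv_two hw v
  have int_first := hf.integrable_mul_norm_fderiv_apply_sq hw v
  have hsplit (x : E) : w x * fderiv ℝ (fun x => ⟪f x, fderiv ℝ f x v⟫_ℝ) x v =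
      w x * ⟪f x, iteratedFDeriv ℝ 2 f x ![v, v]⟫_ℝ + w x * ‖fderiv ℝ f x v‖ ^ 2 := by
    rw [fderiv_inner_fderiv_apply hf.contDiff, mul_add]
  rw [← integral_mul_fderiv_eq_neg_fderiv_mul_of_integrable
      (hf.integrable_fderiv_mul_inner_fderiv hw v)
      ((int_second.add int_first).congr (.of_forall fun x => (hsplit x).symm))
      (hf.integrable_mul_inner hw (continuous_fderiv_apply_const hf.contDiff two_ne_zero v)
        int_first)
      (fun x _ => hw.differentiable x)
      (fun x _ => differentiable_inner_fderiv_apply hf.contDiff v x)]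
  simp only [hsplit]
  rw [integral_add int_second int_first, add_comm]

end Directional

section Laplacian

variable {E F ι : Type*} [NormedAddCommGroup E] [InnerProductSpace ℝ E] [FiniteDimensional ℝ E]
  [MeasurableSpace E] [BorelSpace E] [NormedAddCommGroup F] [InnerProductSpace ℝ F] [Fintype ι]
  {μ : Measure E} {K : ℝ} {w : E → ℝ} {f : E → F}

lemma integrable_mul_norm_laplacian_sq (hf : MemWeightedSobolevTwo μ w f)
    (hw : IsLogLipschitzWeight K w) :
    Integrable (fun x => w x * ‖(Δ f) x‖ ^ 2) μ :=
  integrable_mul_norm_sq_of_norm_le hw.nonneg hw.aestronglyMeasurable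
    (hf.integrable_iteratedFDeriv 2 le_rfl)
    (continuous_laplacian hf.contDiff).aestronglyMeasurable (norm_laplacian_le f)

lemma integral_mul_sum_norm_fderiv_sq_add [μ.IsAddHaarMeasure]
    (hf : MemWeightedSobolevTwo μ w f) (hw : IsLogLipschitzWeight K w)
    (b : OrthonormalBasis ι ℝ E) :
    ∫ x, w x * ∑ i, ‖fderiv ℝ f x (b i)‖ ^ 2 ∂μ + ∫ x, w x * ⟪f x, (Δ f) x⟫_ℝ ∂μ =
      -∫ x, ∑ i, fderiv ℝ w x (b i) * ⟪f x, fderiv ℝ f x (b i)⟫_ℝ ∂μ := by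
  simp only [InnerProductSpace.laplacian_eq_iteratedFDeriv_orthonormalBasis f b, inner_sum,
    Finset.mul_sum]
  rw [integral_finsetSum _ fun i _ => hf.integrable_mul_norm_fderiv_apply_sq hw (b i),
    integral_finsetSum _ fun i _ => hf.integrable_mul_inner_iteratedFDeriv_two hw (b i),
    integral_finsetSum _ fun i _ => hf.integrable_fderiv_mul_inner_fderiv hw (b i),
    ← Finset.sum_add_distrib, ← Finset.sum_neg_distrib]
  exact Finset.sum_congr rfl fun i _ => hf.integral_mul_norm_fderiv_apply_sq_add hw (b i)

lemma neg_two_mul_integral_sum_fderiv_mul_inner_le (hf : MemWeightedSobolevTwo μ w f)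
    (hw : IsLogLipschitzWeight K w) (b : OrthonormalBasis ι ℝ E) :
    -(2 * ∫ x, ∑ i, fderiv ℝ w x (b i) * ⟪f x, fderiv ℝ f x (b i)⟫_ℝ ∂μ) ≤
      ∫ x, w x * ∑ i, ‖fderiv ℝ f x (b i)‖ ^ 2 ∂μ + K ^ 2 * ∫ x, w x * ‖f x‖ ^ 2 ∂μ := by
  have int_drift := integrable_finsetSum Finset.univ
    fun i _ => hf.integrable_fderiv_mul_inner_fderiv hw (b i)
  have int_grad : Integrable (fun x => w x * ∑ i, ‖fderiv ℝ f x (b i)‖ ^ 2) μ := by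
    simpa only [Finset.mul_sum] using integrable_finsetSum Finset.univ
      fun i _ => hf.integrable_mul_norm_fderiv_apply_sq hw (b i)
  have int_f := hf.integrable_mul_norm_sq.const_mul (K ^ 2)
  rw [← integral_const_mul, ← integral_const_mul, ← integral_neg, ← integral_add int_grad int_f]
  refine integral_mono (int_drift.const_mul 2).neg (int_grad.add int_f) fun x => ?_
  have hpoint := two_mul_abs_sum_apply_mul_inner_le b (hw.nonneg x) (hw.norm_fderiv_le x) (f x)
    fun i => fderiv ℝ f x (b i)
  have hneg := neg_abs_le (∑ i, fderiv ℝ w x (b i) * ⟪f x, fderiv ℝ f x (b i)⟫_ℝ)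
  dsimp only
  linarith

lemma neg_two_mul_integral_mul_inner_laplacian_le (hf : MemWeightedSobolevTwo μ w f)
    (hw : IsLogLipschitzWeight K w) (ρ : ℝ) :
    -(2 * ρ * ∫ x, w x * ⟪f x, (Δ f) x⟫_ℝ ∂μ) ≤
      ∫ x, w x * ‖(Δ f) x‖ ^ 2 ∂μ + ρ ^ 2 * ∫ x, w x * ‖f x‖ ^ 2 ∂μ := by
  have int_lap := hf.integrable_mul_norm_laplacian_sq hw
  have int_inner := hf.integrable_mul_inner hw (continuous_laplacian hf.contDiff) int_lap
  have int_f := hf.integrable_mul_norm_sq.const_mul (ρ ^ 2)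
  rw [← integral_const_mul, ← integral_const_mul, ← integral_neg, ← integral_add int_lap int_f]
  refine integral_mono (int_inner.const_mul _).neg (int_lap.add int_f) fun x => ?_
  calc -(2 * ρ * (w x * ⟪f x, (Δ f) x⟫_ℝ)) = w x * -(2 * ρ * ⟪f x, (Δ f) x⟫_ℝ) := by ring
    _ ≤ w x * (‖(Δ f) x‖ ^ 2 + ρ ^ 2 * ‖f x‖ ^ 2) :=
        mul_le_mul_of_nonneg_left (neg_two_mul_inner_le_norm_sq_add ρ _ _) (hw.nonneg x)
    _ = w x * ‖(Δ f) x‖ ^ 2 + ρ ^ 2 * (w x * ‖f x‖ ^ 2) := by ring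

end Laplacian

end MemWeightedSobolevTwo

theorem gradient_interpolation_general {E F ι : Type*} [NormedAddCommGroup E]
    [InnerProductSpace ℝ E] [FiniteDimensional ℝ E] [MeasurableSpace E] [BorelSpace E]
    [NormedAddCommGroup F] [InnerProductSpace ℝ F] [Fintype ι] (b : OrthonormalBasis ι ℝ E)
    {μ : Measure E} [μ.IsAddHaarMeasure] {K ρ : ℝ} {w : E → ℝ} {f : E → F}
    (hw : IsLogLipschitzWeight K w) (hf : MemWeightedSobolevTwo μ w f) (hρ : 0 ≤ ρ) :
    ρ * ∫ x, w x * ∑ i, ‖fderiv ℝ f x (b i)‖ ^ 2 ∂μ ≤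
      ∫ x, w x * ‖(Δ f) x‖ ^ 2 ∂μ + (ρ * K ^ 2 + ρ ^ 2) * ∫ x, w x * ‖f x‖ ^ 2 ∂μ := by
  have hgreen := hf.integral_mul_sum_norm_fderiv_sq_add hw b
  have hdrift := hf.neg_two_mul_integral_sum_fderiv_mul_inner_le hw b
  have hcross := hf.neg_two_mul_integral_mul_inner_laplacian_le hw ρ
  linear_combination hcross + ρ * hdrift + 2 * ρ * hgreen

lemma exp_neg_sqrt_le_rpow {s : ℝ} (hs : 0 < s) (n : ℕ) :
    Real.exp (-√s) ≤ n.factorial * s ^ (-(n : ℝ) / 2) := by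
  have hroot : 0 < √s := Real.sqrt_pos.2 hs
  rw [Real.rpow_div_two_eq_sqrt _ hs.le, Real.rpow_neg hroot.le, Real.rpow_natCast, Real.exp_neg]
  calc (Real.exp √s)⁻¹ ≤ (√s ^ n / n.factorial)⁻¹ := by
        gcongr
        exact Real.pow_div_factorial_le_exp _ hroot.le n
    _ = n.factorial * (√s ^ n)⁻¹ := by rw [inv_div, div_eq_mul_inv]

section Phi

variable (d : ℕ) (δ : ℝ) (y : EuclideanSpace ℝ (Fin d))

lemma hasFDerivAt_phi (x : EuclideanSpace ℝ (Fin d)) :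
    HasFDerivAt (phi d δ y)
      (-(phi d δ y x * δ ^ 2 / √(1 + δ ^ 2 * ‖x - y‖ ^ 2)) • innerSL ℝ (x - y)) x := by
  have hpos : 0 < 1 + δ ^ 2 * ‖x - y‖ ^ 2 := by positivity
  have hbracket : HasFDerivAt (fun z => 1 + δ ^ 2 * ‖z - y‖ ^ 2)
      (δ ^ 2 • 2 • (innerSL ℝ (x - y)).comp (.id ℝ _)) x :=
    (((hasFDerivAt_id x).sub_const y).norm_sq.const_mul (δ ^ 2)).const_add 1
  refine (hbracket.sqrt hpos.ne').neg.exp.congr_fderiv ?_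
  ext v
  simp [phi, field]

lemma norm_fderiv_phi_le (x : EuclideanSpace ℝ (Fin d)) :
    ‖fderiv ℝ (phi d δ y) x‖ ≤ |δ| * phi d δ y x := by
  have hphi : 0 < phi d δ y x := Real.exp_pos _
  have hbracket : 0 < √(1 + δ ^ 2 * ‖x - y‖ ^ 2) := by positivity
  have hle : |δ| * ‖x - y‖ ≤ √(1 + δ ^ 2 * ‖x - y‖ ^ 2) :=
    Real.le_sqrt_of_sq_le (by rw [mul_pow, sq_abs]; linarith)
  rw [(hasFDerivAt_phi d δ y x).fderiv, norm_smul, innerSL_apply_norm, norm_neg,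
    Real.norm_of_nonneg (by positivity), div_mul_eq_mul_div, div_le_iff₀ hbracket, ← sq_abs δ]
  calc phi d δ y x * |δ| ^ 2 * ‖x - y‖ = |δ| * phi d δ y x * (|δ| * ‖x - y‖) := by ring
    _ ≤ |δ| * phi d δ y x * √(1 + |δ| ^ 2 * ‖x - y‖ ^ 2) := by rw [sq_abs]; gcongr

lemma isLogLipschitzWeight_phi : IsLogLipschitzWeight |δ| (phi d δ y) where
  nonneg _ := (Real.exp_pos _).le
  differentiable x := (hasFDerivAt_phi d δ y x).differentiableAt
  norm_fderiv_le := norm_fderiv_phi_le d δ y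

variable {δ}

lemma integrable_phi (hδ : δ ≠ 0) : Integrable (phi d δ y) := by
  have hbracket : Integrable fun x : EuclideanSpace ℝ (Fin d) =>
      ((1 : ℝ) + ‖δ • (x - y)‖ ^ 2) ^ (-((d + 1 : ℕ) : ℝ) / 2) :=
    ((integrable_rpow_neg_one_add_norm_sq (by simp)).comp_smul hδ).comp_sub_right y
  refine (hbracket.const_mul ((d + 1).factorial : ℝ)).mono'
    (isLogLipschitzWeight_phi d δ y).aestronglyMeasurable (.of_forall fun x => ?_)
  rw [norm_smul, mul_pow, Real.norm_eq_abs δ, sq_abs,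
    Real.norm_of_nonneg ((isLogLipschitzWeight_phi d δ y).nonneg x)]
  exact exp_neg_sqrt_le_rpow (by positivity) (d + 1)

end Phi

lemma lap_eq_laplacian (d : ℕ) (f : EuclideanSpace ℝ (Fin d) → ℂ) : lap d f = Δ f := by
  rw [InnerProductSpace.laplacian_eq_iteratedFDeriv_orthonormalBasis f
    (EuclideanSpace.basisFun (Fin d) ℝ)]
  simp only [EuclideanSpace.basisFun_apply]
  rfl

/-- For all `d ≥ 1`, `δ > 0`, `ρ > 0` there is `C < ∞` such that for every `y` and every
smooth `f` with all derivatives bounded: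
`ρ ∫ φ_{δ,y} |∇f|² ≤ ∫ φ_{δ,y} |Δf|² + C ∫ φ_{δ,y} |f|²`. -/
theorem gradient_interpolation (d : ℕ) (hd : 1 ≤ d) (δ ρ : ℝ) (hδ : 0 < δ) (hρ : 0 < ρ) :
    ∃ C : ℝ, ∀ y : EuclideanSpace ℝ (Fin d), ∀ f : EuclideanSpace ℝ (Fin d) → ℂ,
      ContDiff ℝ (⊤ : ℕ∞) f → (∀ n : ℕ, ∃ B : ℝ, ∀ x, ‖iteratedFDeriv ℝ n f x‖ ≤ B) →
      ρ * (∫ x, phi d δ y x * gradSq d f x) ≤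
        (∫ x, phi d δ y x * ‖lap d f x‖ ^ 2) + C * (∫ x, phi d δ y x * ‖f x‖ ^ 2) := by
  refine ⟨ρ * |δ| ^ 2 + ρ ^ 2, fun y f hf hbound => ?_⟩
  simpa only [gradSq, lap_eq_laplacian, EuclideanSpace.basisFun_apply] using
    gradient_interpolation_general (EuclideanSpace.basisFun (Fin d) ℝ)
      (isLogLipschitzWeight_phi d δ y)
      (.of_bounded (integrable_phi d y hδ.ne') (contDiff_infty.1 hf 2) fun n _ => hbound n) hρ.le
end

section
/- Let q > 1/2, α ∈ ℝ, β ∈ ℝ with |β| ≤ √(2q+1)/q, and R > 1. There exist constants A, B, C < ∞ (depending only on q, α, β, R) such that for all sufficiently small ε > 0 and all L > 0 the following holds. Let g : ℝ × [0,1] → ℂ be bounded and continuous, and let 𝒮 be a set of bounded classical solutions u : ℝ × [0,1] → ℂ of ∂_t u = (1+iα)∂²_x u + u − (1+iβ)|u|^{2q}u + g, all with the same forcing g and with sup_{x,t} |u(x,t)| ≤ R. Set L'' = L + C log(1/ε). If the set of initial data { u(·,0) : u ∈ 𝒮 } can be covered by N sets each of diameter at most 2ε in the supremum norm on [−L''/2,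 L''/2], then the set of time-one states { u(·,1) : u ∈ 𝒮 } can be covered by at most N · A^{L} · B^{1/ε²} sets each of diameter at most ε in the supremum norm on [−L/2, L/2]. -/
open Complex

/-- `u` is a bounded classical solution on `ℝ × [0,1]` of the one-dimensional
Ginzburg–Landau equation `∂_t u = (1+iα)∂²_x u + u − (1+iβ)|u|^{2q}u + g`:
jointly continuous, `C²` in `x`, bounded together with its first and second spatial
derivatives, and satisfying the equation pointwise. -/
def IsGLSolution1D (q α β : ℝ) (g u : ℝ → ℝ → ℂ) : Prop :=
  ContinuousOn (fun p : ℝ × ℝ => u p.1 p.2) (Set.univ ×ˢ Set.Icc 0 1) ∧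
  (∀ t ∈ Set.Icc (0 : ℝ) 1, ContDiff ℝ 2 (fun x => u x t)) ∧
  (∃ B : ℝ, ∀ t ∈ Set.Icc (0 : ℝ) 1, ∀ x : ℝ, ‖u x t‖ ≤ B ∧
      ‖deriv (fun x' => u x' t) x‖ ≤ B ∧ ‖deriv (deriv (fun x' => u x' t)) x‖ ≤ B) ∧
  (∀ x : ℝ, ∀ t ∈ Set.Icc (0 : ℝ) 1, HasDerivWithinAt (fun s => u x s)
      ((1 + Complex.I * (α : ℂ)) * deriv (deriv (fun x' => u x' t)) x + u x t -
        (1 + Complex.I * (β : ℂ)) * ((‖u x t‖ ^ (2 * q) : ℝ) : ℂ) * u x t + g x t)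
      (Set.Icc 0 1) t)

/-!
The difference `w` of two solutions with the same forcing solves `∂ₜw = (1 + iα)∂ₓ²w + F` with
`‖F‖ ≤ K ‖w‖`, where `K` depends on `q`, `β`, `R` only. In `L²(sech (x - c) dx)` the energy
`(‖A‖² + 2) ‖w‖² + t ‖∂ₓw‖²` grows at most exponentially, `A` being multiplication by `1 + iα`: the
logarithmic derivative of the weight is bounded by `1`, so that integration by parts only produces
terms which the dissipation absorbs. Hence the weighted size of `w` at time `0` controls `w` near
`c` at time `1` in `H¹`. As the weight decays like `e^{-|x - c|}`, initial data which are
`2ε`-close at distance `2 log (1 / ε)` around `c` have weighted size `O(ε)`, and Sobolev's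
inequality bounds `w` at `c` by `O(ε)` and its oscillation on `[c, c + δ]` by `ε / 2`, with `δ`
independent of `ε`. Each set of the initial cover then splits into boundedly many pieces for each
point of a grid of step `δ`.
-/

namespace GinzburgLandau

open MeasureTheory Filter Topology Set

section SechMeasure

/-- The measure with density `1 / cosh (x - c)`, used to localize integrals near `c`: `sech` decays
exponentially, and its logarithmic derivative is bounded by `1`. -/
noncomputable def sechMeasure (c : ℝ) : Measure ℝ :=
  volume.withDensity fun x => ENNReal.ofReal (Real.cosh (x - c))⁻¹

variable (c : ℝ)

lemma measurable_ofReal_inv_cosh_sub :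
    Measurable fun x : ℝ => ENNReal.ofReal (Real.cosh (x - c))⁻¹ := by
  fun_prop

lemma integral_sechMeasure (f : ℝ → ℝ) :
    ∫ x, f x ∂sechMeasure c = ∫ x, (Real.cosh (x - c))⁻¹ * f x := by
  rw [sechMeasure, integral_withDensity_eq_integral_toReal_smul (measurable_ofReal_inv_cosh_sub c)
    (ae_of_all _ fun _ => ENNReal.ofReal_lt_top)]
  simp only [ENNReal.toReal_ofReal (inv_nonneg.2 (Real.cosh_pos _).le), smul_eq_mul]

lemma integrable_sechMeasure_iff {f : ℝ → ℝ} :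
    Integrable f (sechMeasure c) ↔ Integrable fun x => (Real.cosh (x - c))⁻¹ * f x := by
  rw [sechMeasure, integrable_withDensity_iff_integrable_smul' (measurable_ofReal_inv_cosh_sub c)
    (ae_of_all _ fun _ => ENNReal.ofReal_lt_top)]
  simp only [ENNReal.toReal_ofReal (inv_nonneg.2 (Real.cosh_pos _).le), smul_eq_mul]

lemma inv_cosh_le_two_mul_exp (y : ℝ) : (Real.cosh y)⁻¹ ≤ 2 * Real.exp y := by
  rw [inv_le_iff_one_le_mul₀ (Real.cosh_pos y), Real.cosh_eq]
  have : Real.exp y * Real.exp (-y) = 1 := by rw [← Real.exp_add, add_neg_cancel, Real.exp_zero]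
  nlinarith [Real.exp_pos y]

lemma sechMeasure_Iic_sub_le (ρ : ℝ) :
    sechMeasure c (Iic (c - ρ)) ≤ ENNReal.ofReal (2 * Real.exp (-ρ)) := by
  have hi : IntegrableOn (fun x => 2 * Real.exp (-c) * Real.exp x) (Iic (c - ρ)) :=
    (integrableOn_exp_Iic _).const_mul _
  calc sechMeasure c (Iic (c - ρ))
      = ∫⁻ x in Iic (c - ρ), ENNReal.ofReal (Real.cosh (x - c))⁻¹ :=
        withDensity_apply _ measurableSet_Iic
    _ ≤ ∫⁻ x in Iic (c - ρ), ENNReal.ofReal (2 * Real.exp (-c) * Real.exp x) := by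
        gcongr with x
        rw [mul_assoc, ← Real.exp_add, neg_add_eq_sub]
        exact inv_cosh_le_two_mul_exp _
    _ = ENNReal.ofReal (2 * Real.exp (-ρ)) := by
        rw [← ofReal_integral_eq_lintegral_ofReal hi (ae_of_all _ fun _ => by positivity),
          integral_const_mul, integral_exp_Iic, mul_assoc, ← Real.exp_add, ← add_sub_assoc,
          neg_add_cancel, zero_sub]

lemma sechMeasure_Ioi_add_le (ρ : ℝ) :
    sechMeasure c (Ioi (c + ρ)) ≤ ENNReal.ofReal (2 * Real.exp (-ρ)) := by
  have hi : IntegrableOn (fun x => 2 * Real.exp c * Real.exp (-x)) (Ioi (c + ρ)) :=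
    (integrableOn_exp_neg_Ioi _).const_mul _
  calc sechMeasure c (Ioi (c + ρ))
      = ∫⁻ x in Ioi (c + ρ), ENNReal.ofReal (Real.cosh (x - c))⁻¹ :=
        withDensity_apply _ measurableSet_Ioi
    _ ≤ ∫⁻ x in Ioi (c + ρ), ENNReal.ofReal (2 * Real.exp c * Real.exp (-x)) := by
        gcongr with x
        rw [mul_assoc, ← Real.exp_add, ← Real.cosh_neg, neg_sub, ← sub_eq_add_neg]
        exact inv_cosh_le_two_mul_exp _
    _ = ENNReal.ofReal (2 * Real.exp (-ρ)) := by
        rw [← ofReal_integral_eq_lintegral_ofReal hi (ae_of_all _ fun _ => by positivity),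
          integral_const_mul, integral_exp_neg_Ioi, mul_assoc, ← Real.exp_add, neg_add,
          add_neg_cancel_left]

lemma sechMeasure_lt_abs_sub_le (ρ : ℝ) :
    sechMeasure c {x | ρ < |x - c|} ≤ ENNReal.ofReal (4 * Real.exp (-ρ)) := by
  have hsub : {x | ρ < |x - c|} ⊆ Iic (c - ρ) ∪ Ioi (c + ρ) := fun x hx =>
    (lt_abs.1 (mem_ofPred.1 hx)).symm.imp (fun h => mem_Iic.2 (by linarith))
      fun h => mem_Ioi.2 (by linarith)
  calc sechMeasure c {x | ρ < |x - c|}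
      ≤ sechMeasure c (Iic (c - ρ)) + sechMeasure c (Ioi (c + ρ)) :=
        (measure_mono hsub).trans (measure_union_le _ _)
    _ ≤ ENNReal.ofReal (2 * Real.exp (-ρ)) + ENNReal.ofReal (2 * Real.exp (-ρ)) :=
        add_le_add (sechMeasure_Iic_sub_le c ρ) (sechMeasure_Ioi_add_le c ρ)
    _ = ENNReal.ofReal (4 * Real.exp (-ρ)) := by
        rw [← ENNReal.ofReal_add (by positivity) (by positivity)]
        ring_nf

lemma sechMeasure_univ_le : sechMeasure c univ ≤ ENNReal.ofReal 4 := by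
  calc sechMeasure c univ ≤ sechMeasure c (Iic (c - 0)) + sechMeasure c (Ioi (c + 0)) := by
        rw [sub_zero, add_zero, ← Iic_union_Ioi (a := c)]
        exact measure_union_le _ _
    _ ≤ ENNReal.ofReal (2 * Real.exp (-0)) + ENNReal.ofReal (2 * Real.exp (-0)) :=
        add_le_add (sechMeasure_Iic_sub_le c 0) (sechMeasure_Ioi_add_le c 0)
    _ = ENNReal.ofReal 4 := by
        rw [← ENNReal.ofReal_add (by positivity) (by positivity)]
        norm_num

instance : IsFiniteMeasure (sechMeasure c) :=
  ⟨(sechMeasure_univ_le c).trans_lt ENNReal.ofReal_lt_top⟩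

lemma intervalIntegral_le_cosh_mul_integral_sechMeasure {f : ℝ → ℝ} {r : ℝ} (hr : 0 ≤ r)
    (hf : Integrable f (sechMeasure c)) (hf0 : ∀ x, 0 ≤ f x) :
    ∫ x in c..c + r, f x ≤ Real.cosh r * ∫ x, f x ∂sechMeasure c := by
  have hi : Integrable fun x => Real.cosh r * ((Real.cosh (x - c))⁻¹ * f x) :=
    ((integrable_sechMeasure_iff c).1 hf).const_mul _
  have h0 : ∀ x, 0 ≤ Real.cosh r * ((Real.cosh (x - c))⁻¹ * f x) := fun x => by
    have := hf0 x
    positivity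
  have hle : ∀ x ∈ Ioc c (c + r), f x ≤ Real.cosh r * ((Real.cosh (x - c))⁻¹ * f x) := by
    intro x hx
    have hcosh : Real.cosh (x - c) ≤ Real.cosh r := by
      rw [Real.cosh_le_cosh, abs_of_nonneg (sub_nonneg.2 hx.1.le), abs_of_nonneg hr]
      exact sub_le_iff_le_add'.2 hx.2
    rw [← mul_assoc, ← div_eq_mul_inv]
    exact le_mul_of_one_le_left (hf0 x) ((one_le_div (Real.cosh_pos _)).2 hcosh)
  calc ∫ x in c..c + r, f x = ∫ x in Ioc c (c + r), f x :=
        intervalIntegral.integral_of_le (le_add_of_nonneg_right hr)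
    _ ≤ ∫ x in Ioc c (c + r), Real.cosh r * ((Real.cosh (x - c))⁻¹ * f x) := by
        refine integral_mono_of_nonneg (ae_of_all _ hf0) hi.integrableOn ?_
        filter_upwards [ae_restrict_mem measurableSet_Ioc] with x hx using hle x hx
    _ ≤ ∫ x, Real.cosh r * ((Real.cosh (x - c))⁻¹ * f x) :=
        setIntegral_le_integral hi (ae_of_all _ h0)
    _ = Real.cosh r * ∫ x, f x ∂sechMeasure c := by
        rw [integral_const_mul, integral_sechMeasure]

variable {E : Type*} [NormedAddCommGroup E]

lemma integral_normSq_sechMeasure_le {f : ℝ → E} {r B ρ : ℝ} (hB : ∀ x, ‖f x‖ ≤ B)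
    (hr : ∀ x, |x - c| ≤ ρ → ‖f x‖ ≤ r) :
    ∫ x, ‖f x‖ ^ 2 ∂sechMeasure c ≤ 4 * (r ^ 2 + B ^ 2 * Real.exp (-ρ)) := by
  set T : Set ℝ := {x | ρ < |x - c|}
  have hTm : MeasurableSet T := measurableSet_lt measurable_const (by fun_prop)
  have hpt : ∀ x, ‖f x‖ ^ 2 ≤ r ^ 2 + T.indicator (fun _ => B ^ 2) x := fun x => by
    by_cases hx : x ∈ T
    · rw [indicator_of_mem hx]
      exact le_add_of_nonneg_of_le (sq_nonneg r) (pow_le_pow_left₀ (norm_nonneg _) (hB x) 2)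
    · rw [indicator_of_notMem hx, add_zero]
      exact pow_le_pow_left₀ (norm_nonneg _) (hr x (not_lt.1 hx)) 2
  have htot : (sechMeasure c).real univ ≤ 4 :=
    ENNReal.toReal_le_of_le_ofReal (by norm_num) (sechMeasure_univ_le c)
  have htail : (sechMeasure c).real T ≤ 4 * Real.exp (-ρ) :=
    ENNReal.toReal_le_of_le_ofReal (by positivity) (sechMeasure_lt_abs_sub_le c ρ)
  have hi : Integrable (T.indicator fun _ => B ^ 2) (sechMeasure c) :=
    (integrable_const _).indicator hTm
  have hsum : Integrable (fun x => r ^ 2 + T.indicator (fun _ => B ^ 2) x) (sechMeasure c) :=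
    (integrable_const _).add hi
  calc ∫ x, ‖f x‖ ^ 2 ∂sechMeasure c
      ≤ ∫ x, (r ^ 2 + T.indicator (fun _ => B ^ 2) x) ∂sechMeasure c :=
        integral_mono_of_nonneg (ae_of_all _ fun _ => sq_nonneg _) hsum (ae_of_all _ hpt)
    _ = (sechMeasure c).real univ * r ^ 2 + (sechMeasure c).real T * B ^ 2 := by
        rw [integral_add (integrable_const _) hi, integral_indicator_const _ hTm, integral_const,
          smul_eq_mul, smul_eq_mul]
    _ ≤ 4 * r ^ 2 + 4 * Real.exp (-ρ) * B ^ 2 := by gcongr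
    _ = 4 * (r ^ 2 + B ^ 2 * Real.exp (-ρ)) := by ring

end SechMeasure

section WeightedL2

variable {E : Type*} [NormedAddCommGroup E] [InnerProductSpace ℝ E]

lemma integrable_inner_of_memLp_two {X : Type*} [MeasurableSpace X] {μ : Measure X} {f g : X → E}
    (hf : MemLp f 2 μ) (hg : MemLp g 2 μ) : Integrable (fun x => inner ℝ (f x) (g x)) μ :=
  (hf.norm.integrable_mul hg.norm).mono' (hf.1.inner hg.1)
    (ae_of_all _ fun x => norm_inner_le_norm (f x) (g x))

lemma normSq_sub_normSq_le (y z : E) : ‖y‖ ^ 2 - ‖z‖ ^ 2 ≤ 2 * inner ℝ y (y - z) := by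
  have h := norm_sub_sq_real y z
  rw [inner_sub_right, real_inner_self_eq_norm_sq]
  linarith [sq_nonneg ‖y - z‖]

lemma integral_normSq_sub_le {X : Type*} [MeasurableSpace X] {μ : Measure X} {f g : X → E}
    (hf : MemLp f 2 μ) (hg : MemLp g 2 μ) :
    ∫ x, ‖f x‖ ^ 2 ∂μ - ∫ x, ‖g x‖ ^ 2 ∂μ ≤ 2 * ∫ x, inner ℝ (f x) (f x - g x) ∂μ := by
  have hf' : Integrable (fun x => ‖f x‖ ^ 2) μ := hf.integrable_norm_pow two_ne_zero
  have hg' : Integrable (fun x => ‖g x‖ ^ 2) μ := hg.integrable_norm_pow two_ne_zero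
  rw [← integral_sub hf' hg', ← integral_const_mul]
  exact integral_mono (hf'.sub hg') ((integrable_inner_of_memLp_two hf (hf.sub hg)).const_mul 2)
    fun x => normSq_sub_normSq_le (f x) (g x)

lemma tendsto_integral_inner_slope {X : Type*} [MeasurableSpace X] {μ : Measure X}
    {w : ℝ → X → E} {w' f : X → E} {s : Set ℝ} {t C : ℝ} (hf : Integrable f μ)
    (hw : ∀ r ∈ s, AEStronglyMeasurable (w r) μ) (ht : t ∈ s)
    (hC : ∀ r ∈ s, ∀ x, ‖w r x - w t x‖ ≤ C * |r - t|)
    (hw' : ∀ x, HasDerivWithinAt (fun r => w r x) (w' x) s t) :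
    Tendsto (fun r => ∫ x, inner ℝ (f x) (slope (fun r => w r x) t r) ∂μ) (𝓝[s \ {t}] t)
      (𝓝 (∫ x, inner ℝ (f x) (w' x) ∂μ)) := by
  refine tendsto_integral_filter_of_dominated_convergence (fun x => ‖f x‖ * C) ?_ ?_
    (hf.norm.mul_const C) (ae_of_all _ fun x =>
      tendsto_const_nhds.inner (hasDerivWithinAt_iff_tendsto_slope.1 (hw' x)))
  · filter_upwards [self_mem_nhdsWithin] with r hr
    exact hf.1.inner (((hw r hr.1).sub (hw t ht)).const_smul (r - t)⁻¹)
  · filter_upwards [self_mem_nhdsWithin] with r hr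
    refine ae_of_all _ fun x => (norm_inner_le_norm _ _).trans ?_
    have hrt : 0 < |r - t| := abs_pos.2 (sub_ne_zero.2 hr.2)
    gcongr
    rw [slope_def_module, norm_smul, norm_inv, Real.norm_eq_abs, inv_mul_le_iff₀ hrt, mul_comm]
    exact hC r hr.1 x

lemma continuous_tanh : Continuous Real.tanh := by
  rw [funext Real.tanh_eq_sinh_div_cosh]
  exact Real.continuous_sinh.div Real.continuous_cosh fun x => (Real.cosh_pos x).ne'

lemma norm_tanh_smul_le {E : Type*} [NormedAddCommGroup E] [NormedSpace ℝ E] (y : ℝ) (z : E) :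
    ‖Real.tanh y • z‖ ≤ ‖z‖ := by
  rw [norm_smul]
  exact mul_le_of_le_one_left (norm_nonneg _) (Real.abs_tanh_lt_one y).le

lemma memLp_tanh_sub_smul {μ : Measure ℝ} {p : ENNReal} {f : ℝ → E} (c : ℝ) (hf : MemLp f p μ) :
    MemLp (fun x => Real.tanh (x - c) • f x) p μ := by
  have ht : Continuous fun x => Real.tanh (x - c) := continuous_tanh.comp (by fun_prop)
  exact hf.of_le (ht.aestronglyMeasurable.smul hf.1) (ae_of_all _ fun x => norm_tanh_smul_le _ _)

lemma integral_inner_deriv_sechMeasure (c : ℝ) {f f' g g' : ℝ → E}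
    (hf : ∀ x, HasDerivAt f (f' x) x) (hg : ∀ x, HasDerivAt g (g' x) x)
    (hf2 : MemLp f 2 (sechMeasure c)) (hf2' : MemLp f' 2 (sechMeasure c))
    (hg2 : MemLp g 2 (sechMeasure c)) (hg2' : MemLp g' 2 (sechMeasure c)) :
    ∫ x, inner ℝ (f x) (g' x) ∂sechMeasure c =
      ∫ x, inner ℝ (Real.tanh (x - c) • f x - f' x) (g x) ∂sechMeasure c := by
  have h1 := integrable_inner_of_memLp_two hf2 hg2'
  have h2 : Integrable (fun x => inner ℝ (Real.tanh (x - c) • f x - f' x) (g x)) (sechMeasure c) :=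
    integrable_inner_of_memLp_two ((memLp_tanh_sub_smul c hf2).sub hf2') hg2
  rw [← sub_eq_zero, ← integral_sub h1 h2, integral_sechMeasure]
  refine integral_eq_zero_of_hasDerivAt_of_integrable
    (f := fun x => (Real.cosh (x - c))⁻¹ * inner ℝ (f x) (g x)) (fun x => ?_)
    ((integrable_sechMeasure_iff c).1 (h1.sub h2))
    ((integrable_sechMeasure_iff c).1 (integrable_inner_of_memLp_two hf2 hg2))
  have hcosh : HasDerivAt (fun x => (Real.cosh (x - c))⁻¹)
      (-Real.sinh (x - c) / Real.cosh (x - c) ^ 2) x := by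
    simpa using ((Real.hasDerivAt_cosh _).comp_sub_const x c).fun_inv (Real.cosh_pos _).ne'
  refine (hcosh.mul ((hf x).inner ℝ (hg x))).congr_deriv ?_
  have := (Real.cosh_pos (x - c)).ne'
  simp only [inner_sub_left, real_inner_smul_left, Real.tanh_eq_sinh_div_cosh]
  field_simp
  ring

end WeightedL2

lemma le_exp_mul_of_left_slope_lt {φ : ℝ → ℝ} {a b K : ℝ} (hab : a ≤ b)
    (hφ : ContinuousOn φ (Icc a b))
    (h : ∀ t ∈ Ioc a b, ∀ r, K * φ t < r → ∀ᶠ s in 𝓝[<] t, slope φ t s < r) :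
    φ b ≤ Real.exp (K * (b - a)) * φ a := by
  have hψ : ContinuousOn (fun τ => -φ (-τ)) (Icc (-b) (-a)) :=
    (hφ.comp continuousOn_neg fun τ hτ => ⟨le_neg_of_le_neg hτ.2, neg_le.1 hτ.1⟩).neg
  have key := le_gronwallBound_of_liminf_deriv_right_le (f' := fun τ => K * φ (-τ)) (δ := -φ b)
    (K := -K) (ε := 0) hψ (fun τ hτ r hr => ?_) (by simp) (fun τ _ => by simp) (-a)
    (right_mem_Icc.2 (neg_le_neg hab))
  · rw [gronwallBound_ε0, neg_neg, neg_mul, neg_le_neg_iff,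
      show -K * (-a - -b) = -(K * (b - a)) by ring, Real.exp_neg,
      mul_inv_le_iff₀ (Real.exp_pos _), mul_comm] at key
    exact key
  · have hev := (tendsto_neg_nhdsGT (a := τ)).eventually
      (h (-τ) ⟨lt_neg_of_lt_neg hτ.2, neg_le.1 hτ.1⟩ r hr)
    refine (hev.mono fun σ hσ => ?_).frequently
    rwa [slope_def_field, ← neg_div_neg_eq, neg_sub, neg_sub, neg_sub_neg, div_eq_inv_mul,
      ← neg_sub_neg (φ (-σ))] at hσ

section ParabolicEnergy

variable {E : Type*} [NormedAddCommGroup E]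

/-- The squared norm of `f` in the weighted space `L²(sech (x - c) dx)`. -/
noncomputable def sechNormSq (c : ℝ) (f : ℝ → E) : ℝ :=
  ∫ x, ‖f x‖ ^ 2 ∂sechMeasure c

lemma sechNormSq_nonneg (c : ℝ) (f : ℝ → E) : 0 ≤ sechNormSq c f :=
  integral_nonneg fun _ => sq_nonneg _

variable [InnerProductSpace ℝ E] {A : E →L[ℝ] E} {K : ℝ}

lemma integral_inner_le_of_norm_le {X : Type*} [MeasurableSpace X] {μ : Measure X}
    [IsFiniteMeasure μ] {f g : X → E} {C D : ℝ} (hf : ∀ x, ‖f x‖ ≤ C) (hg : ∀ x, ‖g x‖ ≤ D) :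
    ∫ x, inner ℝ (f x) (g x) ∂μ ≤ C * D * μ.real univ :=
  (Real.le_norm_self _).trans <| norm_integral_le_of_norm_le_const <| ae_of_all _ fun x =>
    (norm_inner_le_norm _ _).trans <|
      mul_le_mul (hf x) (hg x) (norm_nonneg _) ((norm_nonneg _).trans (hf x))

lemma inner_tanh_smul_le (y : ℝ) {z z' : E} {r : ℝ} (h : ‖z'‖ ≤ r) :
    inner ℝ (Real.tanh y • z) z' ≤ ‖z‖ * r :=
  (real_inner_le_norm _ _).trans
    (mul_le_mul (norm_tanh_smul_le y z) h (norm_nonneg _) (norm_nonneg _))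

section Profile

variable {c : ℝ} {f f' f'' G : ℝ → E}

lemma two_mul_integral_inner_parabolic_le (hA : ∀ z, ‖z‖ ^ 2 ≤ inner ℝ z (A z))
    (hf : ∀ x, HasDerivAt f (f' x) x) (hf' : ∀ x, HasDerivAt f' (f'' x) x)
    (hf2 : MemLp f 2 (sechMeasure c)) (hf2' : MemLp f' 2 (sechMeasure c))
    (hf2'' : MemLp f'' 2 (sechMeasure c)) (hG2 : MemLp G 2 (sechMeasure c))
    (hG : ∀ x, ‖G x‖ ≤ K * ‖f x‖) :
    2 * ∫ x, inner ℝ (f x) (A (f'' x) + G x) ∂sechMeasure c ≤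
      (‖A‖ ^ 2 + 1 + K ^ 2) * sechNormSq c f - sechNormSq c f' := by
  have ibp : ∫ x, inner ℝ (f x) (A (f'' x)) ∂sechMeasure c =
      ∫ x, inner ℝ (Real.tanh (x - c) • f x - f' x) (A (f' x)) ∂sechMeasure c :=
    integral_inner_deriv_sechMeasure c hf (fun x => A.hasFDerivAt.comp_hasDerivAt x (hf' x))
      hf2 hf2' (A.comp_memLp' hf2') (A.comp_memLp' hf2'')
  have hi : Integrable (fun x => inner ℝ (Real.tanh (x - c) • f x - f' x) (A (f' x)))
      (sechMeasure c) :=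
    integrable_inner_of_memLp_two ((memLp_tanh_sub_smul c hf2).sub hf2') (A.comp_memLp' hf2')
  have hiA : Integrable (fun x => inner ℝ (f x) (A (f'' x))) (sechMeasure c) :=
    integrable_inner_of_memLp_two hf2 (A.comp_memLp' hf2'')
  have hiG := integrable_inner_of_memLp_two hf2 hG2
  have hi0 := (hf2.integrable_norm_pow two_ne_zero).const_mul (‖A‖ ^ 2 + 1 + K ^ 2)
  have hi1 := hf2'.integrable_norm_pow two_ne_zero
  have hsub : Integrable (fun x => (‖A‖ ^ 2 + 1 + K ^ 2) * ‖f x‖ ^ 2 - ‖f' x‖ ^ 2)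
      (sechMeasure c) := hi0.sub hi1
  have hpt : ∀ x,
      2 * (inner ℝ (Real.tanh (x - c) • f x - f' x) (A (f' x)) + inner ℝ (f x) (G x)) ≤
        (‖A‖ ^ 2 + 1 + K ^ 2) * ‖f x‖ ^ 2 - ‖f' x‖ ^ 2 := fun x => by
    have e1 := inner_tanh_smul_le (x - c) (z := f x) (A.le_opNorm (f' x))
    have e2 := hA (f' x)
    have e3 := (real_inner_le_norm (f x) (G x)).trans
      (mul_le_mul_of_nonneg_left (hG x) (norm_nonneg _))
    rw [inner_sub_left]
    linarith [two_mul_le_add_sq (‖A‖ * ‖f x‖) ‖f' x‖, two_mul_le_add_sq (K * ‖f x‖) ‖f x‖]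
  calc 2 * ∫ x, inner ℝ (f x) (A (f'' x) + G x) ∂sechMeasure c
      = ∫ x, 2 * (inner ℝ (Real.tanh (x - c) • f x - f' x) (A (f' x)) + inner ℝ (f x) (G x))
          ∂sechMeasure c := by
        simp only [inner_add_right]
        rw [integral_add hiA hiG, ibp, ← integral_add hi hiG, integral_const_mul]
    _ ≤ ∫ x, ((‖A‖ ^ 2 + 1 + K ^ 2) * ‖f x‖ ^ 2 - ‖f' x‖ ^ 2) ∂sechMeasure c :=
        integral_mono ((hi.fun_add hiG).const_mul 2) hsub hpt
    _ = (‖A‖ ^ 2 + 1 + K ^ 2) * sechNormSq c f - sechNormSq c f' := by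
        rw [integral_sub hi0 hi1, integral_const_mul, sechNormSq, sechNormSq]

lemma two_mul_integral_inner_deriv_parabolic_le (hA : ∀ z, ‖z‖ ^ 2 ≤ inner ℝ z (A z))
    (hf2 : MemLp f 2 (sechMeasure c)) (hf2' : MemLp f' 2 (sechMeasure c))
    (hf2'' : MemLp f'' 2 (sechMeasure c)) (hG2 : MemLp G 2 (sechMeasure c))
    (hG : ∀ x, ‖G x‖ ≤ K * ‖f x‖) :
    2 * ∫ x, inner ℝ (Real.tanh (x - c) • f' x - f'' x) (A (f'' x) + G x) ∂sechMeasure c ≤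
      (‖A‖ ^ 2 + 1) * sechNormSq c f' + 2 * K ^ 2 * sechNormSq c f := by
  have hi0 := (hf2.integrable_norm_pow two_ne_zero).const_mul (2 * K ^ 2)
  have hi1 := (hf2'.integrable_norm_pow two_ne_zero).const_mul (‖A‖ ^ 2 + 1)
  have hi := integrable_inner_of_memLp_two ((memLp_tanh_sub_smul c hf2').sub hf2'')
    ((A.comp_memLp' hf2'').add hG2)
  have hpt : ∀ x, 2 * inner ℝ (Real.tanh (x - c) • f' x - f'' x) (A (f'' x) + G x) ≤
      (‖A‖ ^ 2 + 1) * ‖f' x‖ ^ 2 + 2 * K ^ 2 * ‖f x‖ ^ 2 := fun x => by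
    have e1 := inner_tanh_smul_le (x - c) (z := f' x) (A.le_opNorm (f'' x))
    have e2 := inner_tanh_smul_le (x - c) (z := f' x) (hG x)
    have e3 := hA (f'' x)
    have e4 : -inner ℝ (f'' x) (G x) ≤ ‖f'' x‖ * (K * ‖f x‖) :=
      (neg_le_abs _).trans ((abs_real_inner_le_norm _ _).trans
        (mul_le_mul_of_nonneg_left (hG x) (norm_nonneg _)))
    rw [inner_sub_left, inner_add_right, inner_add_right]
    linarith [two_mul_le_add_sq (‖A‖ * ‖f' x‖) ‖f'' x‖, two_mul_le_add_sq (K * ‖f x‖) ‖f' x‖,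
      two_mul_le_add_sq (K * ‖f x‖) ‖f'' x‖]
  calc 2 * ∫ x, inner ℝ (Real.tanh (x - c) • f' x - f'' x) (A (f'' x) + G x) ∂sechMeasure c
      ≤ ∫ x, ((‖A‖ ^ 2 + 1) * ‖f' x‖ ^ 2 + 2 * K ^ 2 * ‖f x‖ ^ 2) ∂sechMeasure c := by
        rw [← integral_const_mul]
        exact integral_mono (hi.const_mul 2) (hi1.add hi0) hpt
    _ = (‖A‖ ^ 2 + 1) * sechNormSq c f' + 2 * K ^ 2 * sechNormSq c f := by
        rw [integral_add hi1 hi0, integral_const_mul, integral_const_mul, sechNormSq, sechNormSq]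

end Profile

/-- `w` (time is the first argument) is a bounded classical solution of `∂ₜw = A ∂ₓ²w + F` on
`[0, 1] × ℝ` whose forcing is dominated by the solution itself. Differences of Ginzburg–Landau
solutions have this form. -/
structure IsParabolicSolution (A : E →L[ℝ] E) (K : ℝ) (w F : ℝ → ℝ → E) : Prop where
  contDiff : ∀ t ∈ Icc (0 : ℝ) 1, ContDiff ℝ 2 (w t)
  bounded : ∃ b, ∀ t ∈ Icc (0 : ℝ) 1, ∀ x,
    ‖w t x‖ ≤ b ∧ ‖deriv (w t) x‖ ≤ b ∧ ‖deriv (deriv (w t)) x‖ ≤ b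
  continuous_forcing : ∀ t ∈ Icc (0 : ℝ) 1, Continuous (F t)
  norm_forcing_le : ∀ t ∈ Icc (0 : ℝ) 1, ∀ x, ‖F t x‖ ≤ K * ‖w t x‖
  hasDerivWithinAt : ∀ t ∈ Icc (0 : ℝ) 1, ∀ x,
    HasDerivWithinAt (fun s => w s x) (A (deriv (deriv (w t)) x) + F t x) (Icc 0 1) t

/-- The weighted energy of `w` at time `t`. The factor `t` in front of the gradient makes the energy
at time `0` independent of `∂ₓw`; the factor `‖A‖² + 2` lets dissipation absorb the gradient. -/
noncomputable def energy (A : E →L[ℝ] E) (c : ℝ) (w : ℝ → ℝ → E) (t : ℝ) : ℝ :=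
  (‖A‖ ^ 2 + 2) * sechNormSq c (w t) + t * sechNormSq c (deriv (w t))

namespace IsParabolicSolution

variable {w F : ℝ → ℝ → E} {s t : ℝ}

lemma hasDerivAt (h : IsParabolicSolution A K w F) (ht : t ∈ Icc (0 : ℝ) 1) (x : ℝ) :
    HasDerivAt (w t) (deriv (w t) x) x :=
  ((h.contDiff t ht).differentiable two_ne_zero x).hasDerivAt

lemma contDiff_deriv (h : IsParabolicSolution A K w F) (ht : t ∈ Icc (0 : ℝ) 1) :
    ContDiff ℝ 1 (deriv (w t)) :=
  (contDiff_succ_iff_deriv.1 (h.contDiff t ht)).2.2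

lemma hasDerivAt_deriv (h : IsParabolicSolution A K w F) (ht : t ∈ Icc (0 : ℝ) 1) (x : ℝ) :
    HasDerivAt (deriv (w t)) (deriv (deriv (w t)) x) x :=
  ((h.contDiff_deriv ht).differentiable one_ne_zero x).hasDerivAt

lemma memLp {μ : Measure ℝ} [IsFiniteMeasure μ] (h : IsParabolicSolution A K w F)
    (ht : t ∈ Icc (0 : ℝ) 1) : MemLp (w t) 2 μ :=
  let ⟨b, hb⟩ := h.bounded
  .of_bound (h.contDiff t ht).continuous.aestronglyMeasurable b (ae_of_all _ fun x => (hb t ht x).1)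

lemma memLp_deriv {μ : Measure ℝ} [IsFiniteMeasure μ] (h : IsParabolicSolution A K w F)
    (ht : t ∈ Icc (0 : ℝ) 1) : MemLp (deriv (w t)) 2 μ :=
  let ⟨b, hb⟩ := h.bounded
  .of_bound (h.contDiff_deriv ht).continuous.aestronglyMeasurable b
    (ae_of_all _ fun x => (hb t ht x).2.1)

lemma memLp_deriv_deriv {μ : Measure ℝ} [IsFiniteMeasure μ] (h : IsParabolicSolution A K w F)
    (ht : t ∈ Icc (0 : ℝ) 1) : MemLp (deriv (deriv (w t))) 2 μ :=
  let ⟨b, hb⟩ := h.bounded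
  .of_bound ((h.contDiff_deriv ht).continuous_deriv le_rfl).aestronglyMeasurable b
    (ae_of_all _ fun x => (hb t ht x).2.2)

lemma memLp_forcing {μ : Measure ℝ} [IsFiniteMeasure μ] (h : IsParabolicSolution A K w F)
    (ht : t ∈ Icc (0 : ℝ) 1) : MemLp (F t) 2 μ :=
  h.memLp ht |>.of_le_mul (h.continuous_forcing t ht).aestronglyMeasurable
    (ae_of_all _ (h.norm_forcing_le t ht))

lemma exists_norm_sub_le (h : IsParabolicSolution A K w F) :
    ∃ Λ, 0 ≤ Λ ∧
      ∀ s ∈ Icc (0 : ℝ) 1, ∀ t ∈ Icc (0 : ℝ) 1, ∀ x, ‖w t x - w s x‖ ≤ Λ * |t - s| := by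
  obtain ⟨b, hb⟩ := h.bounded
  have hb0 : 0 ≤ b := (norm_nonneg _).trans (hb 0 ⟨le_rfl, zero_le_one⟩ 0).1
  refine ⟨‖A‖ * b + |K| * b, by positivity, fun s hs t ht x =>
    (convex_Icc (0 : ℝ) 1).norm_image_sub_le_of_norm_hasDerivWithin_le
      (fun r hr => h.hasDerivWithinAt r hr x) (fun r hr => ?_) hs ht⟩
  have hw := (hb r hr x).1
  calc ‖A (deriv (deriv (w r)) x) + F r x‖
      ≤ ‖A‖ * ‖deriv (deriv (w r)) x‖ + |K| * ‖w r x‖ :=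
        norm_add_le_of_le (A.le_opNorm _) ((h.norm_forcing_le r hr x).trans
          (mul_le_mul_of_nonneg_right (le_abs_self K) (norm_nonneg _)))
    _ ≤ ‖A‖ * b + |K| * b := by
        gcongr
        exact (hb r hr x).2.2

-- Convexity replaces differentiating the energy: `∂ₓw` need not be differentiable in `t`.
lemma energy_sub_le (h : IsParabolicSolution A K w F) (c : ℝ) (hs : s ∈ Icc (0 : ℝ) 1)
    (ht : t ∈ Icc (0 : ℝ) 1) :
    energy A c w t - energy A c w s ≤
      (‖A‖ ^ 2 + 2) * (2 * ∫ x, inner ℝ (w t x) (w t x - w s x) ∂sechMeasure c) +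
        s * (2 * ∫ x, inner ℝ (Real.tanh (x - c) • deriv (w t) x - deriv (deriv (w t)) x)
          (w t x - w s x) ∂sechMeasure c) +
        (t - s) * sechNormSq c (deriv (w t)) := by
  have ibp : ∫ x, inner ℝ (deriv (w t) x) (deriv (w t) x - deriv (w s) x) ∂sechMeasure c =
      ∫ x, inner ℝ (Real.tanh (x - c) • deriv (w t) x - deriv (deriv (w t)) x)
        (w t x - w s x) ∂sechMeasure c :=
    integral_inner_deriv_sechMeasure c (h.hasDerivAt_deriv ht)
      (fun x => (h.hasDerivAt ht x).sub (h.hasDerivAt hs x)) (h.memLp_deriv ht)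
      (h.memLp_deriv_deriv ht) ((h.memLp ht).sub (h.memLp hs))
      ((h.memLp_deriv ht).sub (h.memLp_deriv hs))
  have hw : sechNormSq c (w t) - sechNormSq c (w s) ≤
      2 * ∫ x, inner ℝ (w t x) (w t x - w s x) ∂sechMeasure c :=
    integral_normSq_sub_le (h.memLp ht) (h.memLp hs)
  have hwx : sechNormSq c (deriv (w t)) - sechNormSq c (deriv (w s)) ≤
      2 * ∫ x, inner ℝ (deriv (w t) x) (deriv (w t) x - deriv (w s) x) ∂sechMeasure c :=
    integral_normSq_sub_le (h.memLp_deriv ht) (h.memLp_deriv hs)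
  rw [ibp] at hwx
  have h1 := mul_le_mul_of_nonneg_left hw (by positivity : 0 ≤ ‖A‖ ^ 2 + 2)
  have h2 := mul_le_mul_of_nonneg_left hwx hs.1
  unfold energy
  linarith

lemma continuousOn_energy (h : IsParabolicSolution A K w F) (c : ℝ) :
    ContinuousOn (energy A c w) (Icc 0 1) := by
  obtain ⟨b, hb⟩ := h.bounded
  obtain ⟨Λ, hΛ0, hΛ⟩ := h.exists_norm_sub_le
  have hb0 : 0 ≤ b := (norm_nonneg _).trans (hb 0 ⟨le_rfl, zero_le_one⟩ 0).1
  set m := (sechMeasure c).real univ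
  set κ := (‖A‖ ^ 2 + 2) * (2 * (b * Λ * m)) + 2 * ((b + b) * Λ * m) + b * b * m with hκ
  have hκ0 : 0 ≤ κ := by positivity
  refine (LipschitzOnWith.of_le_add_mul (NNReal.mk κ hκ0) fun t ht s hs => ?_).continuousOn
  have hw : ∫ x, inner ℝ (w t x) (w t x - w s x) ∂sechMeasure c ≤ b * (Λ * |t - s|) * m :=
    integral_inner_le_of_norm_le (fun x => (hb t ht x).1) (hΛ s hs t ht)
  have hwx : ∫ x, inner ℝ (Real.tanh (x - c) • deriv (w t) x - deriv (deriv (w t)) x)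
      (w t x - w s x) ∂sechMeasure c ≤ (b + b) * (Λ * |t - s|) * m :=
    integral_inner_le_of_norm_le (fun x => norm_sub_le_of_le
      ((norm_tanh_smul_le _ _).trans (hb t ht x).2.1) (hb t ht x).2.2) (hΛ s hs t ht)
  have hx : sechNormSq c (deriv (w t)) ≤ b * b * m := by
    simp only [sechNormSq, ← real_inner_self_eq_norm_sq]
    exact integral_inner_le_of_norm_le (fun x => (hb t ht x).2.1) fun x => (hb t ht x).2.1
  have h1 := mul_le_mul_of_nonneg_left hw (by positivity : 0 ≤ (‖A‖ ^ 2 + 2) * 2)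
  have h2 : s * _ ≤ 1 * _ := mul_le_mul_of_nonneg hs.2 hwx hs.1 (by positivity)
  have h3 : (t - s) * _ ≤ |t - s| * _ :=
    mul_le_mul (le_abs_self _) hx (sechNormSq_nonneg _ _) (abs_nonneg _)
  rw [NNReal.coe_mk, Real.dist_eq, hκ]
  linarith [h.energy_sub_le c hs ht]

lemma energy_deriv_le (hA : ∀ z, ‖z‖ ^ 2 ≤ inner ℝ z (A z)) (h : IsParabolicSolution A K w F)
    (c : ℝ) (ht : t ∈ Icc (0 : ℝ) 1) :
    (‖A‖ ^ 2 + 2) * (2 * ∫ x, inner ℝ (w t x) (A (deriv (deriv (w t)) x) + F t x) ∂sechMeasure c) +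
        t * (2 * ∫ x, inner ℝ (Real.tanh (x - c) • deriv (w t) x - deriv (deriv (w t)) x)
          (A (deriv (deriv (w t)) x) + F t x) ∂sechMeasure c) +
        sechNormSq c (deriv (w t)) ≤
      (‖A‖ ^ 2 + 1 + 2 * K ^ 2) * energy A c w t := by
  have hw := two_mul_integral_inner_parabolic_le (c := c) hA (h.hasDerivAt ht)
    (h.hasDerivAt_deriv ht) (h.memLp ht) (h.memLp_deriv ht) (h.memLp_deriv_deriv ht)
    (h.memLp_forcing ht) (h.norm_forcing_le t ht)
  have hwx := two_mul_integral_inner_deriv_parabolic_le (c := c) hA (h.memLp ht) (h.memLp_deriv ht)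
    (h.memLp_deriv_deriv ht) (h.memLp_forcing ht) (h.norm_forcing_le t ht)
  have hQ := sechNormSq_nonneg c (w t)
  have hQx := sechNormSq_nonneg c (deriv (w t))
  have h1 := mul_le_mul_of_nonneg_left hw (by positivity : 0 ≤ ‖A‖ ^ 2 + 2)
  have h2 := mul_le_mul_of_nonneg_left hwx ht.1
  have h3 : 0 ≤ (1 - t) * ((‖A‖ ^ 2 + 1) * sechNormSq c (deriv (w t)) +
      2 * K ^ 2 * sechNormSq c (w t)) :=
    mul_nonneg (sub_nonneg.2 ht.2) (by positivity)
  have h4 : 0 ≤ (‖A‖ ^ 2 + 1 + 2 * K ^ 2) * (t * sechNormSq c (deriv (w t))) +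
      ‖A‖ ^ 2 * K ^ 2 * sechNormSq c (w t) :=
    add_nonneg (mul_nonneg (by positivity) (mul_nonneg ht.1 hQx)) (by positivity)
  unfold energy
  linarith

lemma slope_energy_le (h : IsParabolicSolution A K w F) (c : ℝ) (hs : s ∈ Icc (0 : ℝ) 1)
    (ht : t ∈ Icc (0 : ℝ) 1) (hst : s < t) :
    slope (energy A c w) t s ≤
      (‖A‖ ^ 2 + 2) * (2 * ∫ x, inner ℝ (w t x) (slope (fun r => w r x) t s) ∂sechMeasure c) +
        s * (2 * ∫ x, inner ℝ (Real.tanh (x - c) • deriv (w t) x - deriv (deriv (w t)) x)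
          (slope (fun r => w r x) t s) ∂sechMeasure c) +
        sechNormSq c (deriv (w t)) := by
  have hpos : 0 < t - s := sub_pos.2 hst
  have hslope : ∀ f : ℝ → E,
      ∫ x, inner ℝ (f x) (slope (fun r => w r x) t s) ∂sechMeasure c =
        (t - s)⁻¹ * ∫ x, inner ℝ (f x) (w t x - w s x) ∂sechMeasure c := fun f => by
    simp only [slope_comm _ t s, slope_def_module, real_inner_smul_right, integral_const_mul]
  rw [hslope, hslope, slope_comm, slope_def_field, div_le_iff₀ hpos]
  refine (h.energy_sub_le c hs ht).trans_eq ?_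
  field_simp

lemma eventually_slope_energy_lt (hA : ∀ z, ‖z‖ ^ 2 ≤ inner ℝ z (A z))
    (h : IsParabolicSolution A K w F) (c : ℝ) (ht : t ∈ Ioc (0 : ℝ) 1) {r : ℝ}
    (hr : (‖A‖ ^ 2 + 1 + 2 * K ^ 2) * energy A c w t < r) :
    ∀ᶠ s in 𝓝[<] t, slope (energy A c w) t s < r := by
  have ht' : t ∈ Icc (0 : ℝ) 1 := Ioc_subset_Icc_self ht
  obtain ⟨Λ, -, hΛ⟩ := h.exists_norm_sub_le
  have hev : ∀ᶠ s in 𝓝[<] t, s ∈ Icc (0 : ℝ) 1 \ {t} := by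
    filter_upwards [Ioo_mem_nhdsLT ht.1] with s hs
    exact ⟨⟨hs.1.le, hs.2.le.trans ht.2⟩, hs.2.ne⟩
  have hlim : ∀ f : ℝ → E, MemLp f 2 (sechMeasure c) →
      Tendsto (fun s => ∫ x, inner ℝ (f x) (slope (fun r => w r x) t s) ∂sechMeasure c) (𝓝[<] t)
        (𝓝 (∫ x, inner ℝ (f x) (A (deriv (deriv (w t)) x) + F t x) ∂sechMeasure c)) := fun f hf =>
    (tendsto_integral_inner_slope (hf.integrable one_le_two) (fun r hr => (h.memLp hr).1) ht'
      (fun r hr => hΛ t ht' r hr) (h.hasDerivWithinAt t ht')).mono_left (nhdsWithin_le_iff.2 hev)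
  have hid : Tendsto id (𝓝[<] t) (𝓝 t) := nhdsWithin_le_nhds
  have hsum := (((hlim _ (h.memLp ht')).const_mul 2).const_mul (‖A‖ ^ 2 + 2)).add
    (hid.mul ((hlim _ ((memLp_tanh_sub_smul c (h.memLp_deriv ht')).sub
      (h.memLp_deriv_deriv ht'))).const_mul 2)) |>.add_const (sechNormSq c (deriv (w t)))
  filter_upwards [hsum.eventually_lt_const ((h.energy_deriv_le hA c ht').trans_lt hr), hev,
    self_mem_nhdsWithin] with s hlt hs hst
  exact (h.slope_energy_le c hs.1 ht' hst).trans_lt hlt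

theorem sechNormSq_one_add_sechNormSq_deriv_one_le (hA : ∀ z, ‖z‖ ^ 2 ≤ inner ℝ z (A z))
    (h : IsParabolicSolution A K w F) (c : ℝ) :
    sechNormSq c (w 1) + sechNormSq c (deriv (w 1)) ≤
      Real.exp (‖A‖ ^ 2 + 1 + 2 * K ^ 2) * (‖A‖ ^ 2 + 2) * sechNormSq c (w 0) := by
  have hgronwall := le_exp_mul_of_left_slope_lt zero_le_one (h.continuousOn_energy c)
    fun t ht r hr => h.eventually_slope_energy_lt hA c ht hr
  have hQ := sechNormSq_nonneg c (w 1)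
  have hnn : 0 ≤ (‖A‖ ^ 2 + 1) * sechNormSq c (w 1) := by positivity
  simp only [energy, sub_zero, mul_one, one_mul, zero_mul, add_zero] at hgronwall
  linarith

end IsParabolicSolution

end ParabolicEnergy

section Sobolev

variable {E : Type*} [NormedAddCommGroup E]

lemma sq_intervalIntegral_le {g : ℝ → ℝ} {a b : ℝ} (hg : Continuous g) (hab : a ≤ b) :
    (∫ x in a..b, g x) ^ 2 ≤ (b - a) * ∫ x in a..b, g x ^ 2 := by
  have hi1 : IntervalIntegrable g volume a b := hg.intervalIntegrable a b
  have hi2 : IntervalIntegrable (fun x => g x ^ 2) volume a b := (hg.pow 2).intervalIntegrable a b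
  have hquad : ∀ y, 0 ≤ (b - a) * (y * y) + (-2 * ∫ x in a..b, g x) * y + ∫ x in a..b, g x ^ 2 :=
    fun y => calc
      0 ≤ ∫ x in a..b, (g x - y) ^ 2 := intervalIntegral.integral_nonneg hab fun _ _ => sq_nonneg _
      _ = ∫ x in a..b, (g x ^ 2 - 2 * y * g x + y ^ 2) := by
        congr with x
        ring
      _ = _ := by
        rw [intervalIntegral.integral_add (hi2.sub (hi1.const_mul _)) intervalIntegrable_const,
          intervalIntegral.integral_sub hi2 (hi1.const_mul _),
          intervalIntegral.integral_const_mul, intervalIntegral.integral_const, smul_eq_mul]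
        ring
  have := discrim_le_zero hquad
  rw [discrim] at this
  linarith

lemma intervalIntegral_normSq_le_cosh_mul_sechNormSq {c : ℝ} {f : ℝ → E}
    (hf : MemLp f 2 (sechMeasure c)) :
    ∫ x in c..c + 1, ‖f x‖ ^ 2 ≤ Real.cosh 1 * sechNormSq c f :=
  intervalIntegral_le_cosh_mul_integral_sechMeasure c zero_le_one
    (hf.integrable_norm_pow two_ne_zero) fun _ => sq_nonneg _

variable [NormedSpace ℝ E] [CompleteSpace E] {f : ℝ → E}

lemma normSq_sub_le_intervalIntegral_deriv {a b : ℝ} (hf : ContDiff ℝ 1 f) (hab : a ≤ b) :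
    ‖f b - f a‖ ^ 2 ≤ (b - a) * ∫ x in a..b, ‖deriv f x‖ ^ 2 := by
  have hf' : Continuous (deriv f) := hf.continuous_deriv le_rfl
  rw [← intervalIntegral.integral_deriv_eq_sub
    (fun x _ => hf.differentiable one_ne_zero x) (hf'.intervalIntegrable a b)]
  exact (pow_le_pow_left₀ (norm_nonneg _)
    (intervalIntegral.norm_integral_le_integral_norm hab) 2).trans
    (sq_intervalIntegral_le hf'.norm hab)

lemma normSq_sub_le_of_mem_Icc {c x : ℝ} (hf : ContDiff ℝ 1 f) (hx : x ∈ Icc c (c + 1)) :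
    ‖f x - f c‖ ^ 2 ≤ (x - c) * ∫ y in c..c + 1, ‖deriv f y‖ ^ 2 :=
  (normSq_sub_le_intervalIntegral_deriv hf hx.1).trans <|
    mul_le_mul_of_nonneg_left
      (intervalIntegral.integral_mono_interval le_rfl hx.1 hx.2 (ae_of_all _ fun _ => sq_nonneg _)
        (((hf.continuous_deriv le_rfl).norm.pow 2).intervalIntegrable _ _))
      (sub_nonneg.2 hx.1)

lemma normSq_apply_le_intervalIntegral (hf : ContDiff ℝ 1 f) (c : ℝ) :
    ‖f c‖ ^ 2 ≤
      2 * ((∫ x in c..c + 1, ‖f x‖ ^ 2) + ∫ x in c..c + 1, ‖deriv f x‖ ^ 2) := by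
  have hpt : ∀ x ∈ Icc c (c + 1),
      ‖f c‖ ^ 2 ≤ 2 * (‖f x‖ ^ 2 + ∫ y in c..c + 1, ‖deriv f y‖ ^ 2) := fun x hx => by
    have hsub := normSq_sub_le_of_mem_Icc hf hx
    have hint : 0 ≤ ∫ y in c..c + 1, ‖deriv f y‖ ^ 2 :=
      intervalIntegral.integral_nonneg (by linarith) fun _ _ => sq_nonneg _
    have htri := pow_le_pow_left₀ (norm_nonneg _) (norm_sub_le (f x) (f x - f c)) 2
    rw [sub_sub_cancel] at htri
    have := mul_le_of_le_one_left hint (by linarith [hx.2] : x - c ≤ 1)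
    linarith [two_mul_le_add_sq ‖f x‖ ‖f x - f c‖]
  have hi : IntervalIntegrable (fun x => ‖f x‖ ^ 2) volume c (c + 1) :=
    (hf.continuous.norm.pow 2).intervalIntegrable _ _
  have hmono := intervalIntegral.integral_mono_on (by linarith) intervalIntegrable_const
    ((hi.add intervalIntegrable_const).const_mul 2) hpt
  simpa only [intervalIntegral.integral_const_mul,
    intervalIntegral.integral_add hi intervalIntegrable_const, intervalIntegral.integral_const,
    add_sub_cancel_left, one_smul] using hmono

end Sobolev

section Smoothing

variable {E : Type*} [NormedAddCommGroup E] [InnerProductSpace ℝ E]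
  {A : E →L[ℝ] E} {K : ℝ} {w F : ℝ → ℝ → E}

/-- The constant in the smoothing estimate for `∂ₜw = A ∂ₓ²w + F` with `‖F‖ ≤ K ‖w‖`; the factor
`cosh 1` is the price of the weight on `[c, c + 1]`. -/
noncomputable def smoothingConst (A : E →L[ℝ] E) (K : ℝ) : ℝ :=
  Real.cosh 1 * (Real.exp (‖A‖ ^ 2 + 1 + 2 * K ^ 2) * (‖A‖ ^ 2 + 2))

lemma smoothingConst_pos (A : E →L[ℝ] E) (K : ℝ) : 0 < smoothingConst A K :=
  mul_pos (Real.cosh_pos 1) (by positivity)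

variable [CompleteSpace E]

theorem IsParabolicSolution.normSq_one_le (hA : ∀ z, ‖z‖ ^ 2 ≤ inner ℝ z (A z))
    (h : IsParabolicSolution A K w F) (c : ℝ) :
    ‖w 1 c‖ ^ 2 ≤ 2 * (smoothingConst A K * sechNormSq c (w 0)) := by
  have h1 : (1 : ℝ) ∈ Icc (0 : ℝ) 1 := right_mem_Icc.2 zero_le_one
  refine (normSq_apply_le_intervalIntegral ((h.contDiff 1 h1).of_le one_le_two) c).trans ?_
  refine mul_le_mul_of_nonneg_left ?_ zero_le_two
  refine (add_le_add (intervalIntegral_normSq_le_cosh_mul_sechNormSq (h.memLp h1))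
    (intervalIntegral_normSq_le_cosh_mul_sechNormSq (h.memLp_deriv h1))).trans ?_
  rw [← mul_add, smoothingConst, mul_assoc]
  exact mul_le_mul_of_nonneg_left (h.sechNormSq_one_add_sechNormSq_deriv_one_le hA c)
    (Real.cosh_pos 1).le

theorem IsParabolicSolution.normSq_one_sub_one_le (hA : ∀ z, ‖z‖ ^ 2 ≤ inner ℝ z (A z))
    (h : IsParabolicSolution A K w F) {c x : ℝ} (hx : x ∈ Icc c (c + 1)) :
    ‖w 1 x - w 1 c‖ ^ 2 ≤ (x - c) * (smoothingConst A K * sechNormSq c (w 0)) := by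
  have h1 : (1 : ℝ) ∈ Icc (0 : ℝ) 1 := right_mem_Icc.2 zero_le_one
  refine (normSq_sub_le_of_mem_Icc ((h.contDiff 1 h1).of_le one_le_two) hx).trans ?_
  refine mul_le_mul_of_nonneg_left ?_ (sub_nonneg.2 hx.1)
  refine (intervalIntegral_normSq_le_cosh_mul_sechNormSq (h.memLp_deriv h1)).trans ?_
  rw [smoothingConst, mul_assoc]
  refine mul_le_mul_of_nonneg_left ?_ (Real.cosh_pos 1).le
  linarith [h.sechNormSq_one_add_sechNormSq_deriv_one_le hA c, sechNormSq_nonneg c (w 1)]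

end Smoothing

section Reaction

lemma rpow_sub_rpow_mul_le {p r s : ℝ} (hp : 0 ≤ p) (hr : 0 ≤ r) (hrs : r ≤ s) :
    (s ^ p - r ^ p) * r ≤ p * s ^ p * (s - r) := by
  rcases hr.eq_or_lt with rfl | hr
  · have := Real.rpow_nonneg hrs p
    rw [mul_zero]
    positivity
  have hs : 0 < s := hr.trans_le hrs
  have hlog : 1 - s / r ≤ Real.log (r / s) := by
    simpa only [inv_div] using Real.one_sub_inv_le_log_of_pos (div_pos hr hs)
  have hpow : 1 + p * (1 - s / r) ≤ r ^ p / s ^ p := by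
    rw [← Real.div_rpow hr.le hs.le, Real.rpow_def_of_pos (div_pos hr hs)]
    linarith [Real.add_one_le_exp (Real.log (r / s) * p), mul_le_mul_of_nonneg_left hlog hp]
  have hmul := mul_le_mul_of_nonneg_right
    ((le_div_iff₀ (Real.rpow_pos_of_pos hs p)).1 hpow) hr.le
  have hexpand : (1 + p * (1 - s / r)) * s ^ p * r = s ^ p * r - p * s ^ p * (s - r) := by
    field_simp
    ring
  linarith

variable {E : Type*} [NormedAddCommGroup E] [NormedSpace ℝ E]

lemma norm_norm_rpow_smul_sub_le {p R : ℝ} (hp : 0 ≤ p) {y z : E} (hy : ‖y‖ ≤ R) (hz : ‖z‖ ≤ R) :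
    ‖‖y‖ ^ p • y - ‖z‖ ^ p • z‖ ≤ (1 + p) * R ^ p * ‖y - z‖ := by
  wlog hzy : ‖z‖ ≤ ‖y‖ generalizing y z
  · rw [norm_sub_rev, norm_sub_rev y]
    exact this hz hy (le_of_not_ge hzy)
  have hpow : ‖z‖ ^ p ≤ ‖y‖ ^ p := Real.rpow_le_rpow (norm_nonneg z) hzy hp
  calc ‖‖y‖ ^ p • y - ‖z‖ ^ p • z‖
      = ‖‖y‖ ^ p • (y - z) + (‖y‖ ^ p - ‖z‖ ^ p) • z‖ := by
        congr 1
        module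
    _ ≤ ‖y‖ ^ p * ‖y - z‖ + (‖y‖ ^ p - ‖z‖ ^ p) * ‖z‖ := by
        refine norm_add_le_of_le ?_ ?_ <;> rw [norm_smul, Real.norm_of_nonneg]
        · positivity
        · exact sub_nonneg.2 hpow
    _ ≤ ‖y‖ ^ p * ‖y - z‖ + p * ‖y‖ ^ p * ‖y - z‖ := by
        refine add_le_add_right ?_ _
        exact (rpow_sub_rpow_mul_le hp (norm_nonneg z) hzy).trans
          (mul_le_mul_of_nonneg_left (norm_sub_norm_le y z) (by positivity))
    _ = (1 + p) * ‖y‖ ^ p * ‖y - z‖ := by ring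
    _ ≤ (1 + p) * R ^ p * ‖y - z‖ := by gcongr

end Reaction

section GinzburgLandauDifference

variable {q α β R : ℝ} {g u v : ℝ → ℝ → ℂ}

/-- The Lipschitz constant of the reaction term `z ↦ z - (1 + iβ) |z|^{2q} z` on the ball of radius
`R`. -/
noncomputable def reactionConst (q β R : ℝ) : ℝ :=
  1 + ‖1 + Complex.I * (β : ℂ)‖ * ((1 + 2 * q) * R ^ (2 * q))

lemma isParabolicSolution_sub (hq : 0 ≤ q) (hu : IsGLSolution1D q α β g u)
    (hv : IsGLSolution1D q α β g v) (huR : ∀ x, ∀ t ∈ Icc (0 : ℝ) 1, ‖u x t‖ ≤ R)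
    (hvR : ∀ x, ∀ t ∈ Icc (0 : ℝ) 1, ‖v x t‖ ≤ R) :
    IsParabolicSolution (ContinuousLinearMap.mul ℝ ℂ (1 + Complex.I * α)) (reactionConst q β R)
      (fun t x => u x t - v x t)
      (fun t x => u x t - v x t -
        (1 + Complex.I * β) * (‖u x t‖ ^ (2 * q) • u x t - ‖v x t‖ ^ (2 * q) • v x t)) := by
  obtain ⟨-, u2, ⟨Bu, hBu⟩, ut⟩ := hu
  obtain ⟨-, v2, ⟨Bv, hBv⟩, vt⟩ := hv
  have hderiv : ∀ t ∈ Icc (0 : ℝ) 1, deriv (fun x => u x t - v x t) =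
      fun x => deriv (fun y => u y t) x - deriv (fun y => v y t) x := fun t ht => funext fun x =>
    deriv_fun_sub ((u2 t ht).differentiable two_ne_zero x)
      ((v2 t ht).differentiable two_ne_zero x)
  have hderiv2 : ∀ t ∈ Icc (0 : ℝ) 1, deriv (deriv fun x => u x t - v x t) =
      fun x => deriv (deriv fun y => u y t) x - deriv (deriv fun y => v y t) x := fun t ht => by
    rw [hderiv t ht]
    exact funext fun x => deriv_fun_sub ((u2 t ht).differentiable_deriv_two x)
      ((v2 t ht).differentiable_deriv_two x)
  have hreaction : ∀ {f : ℝ → ℂ}, Continuous f → Continuous fun x => ‖f x‖ ^ (2 * q) • f x :=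
    fun hf => (hf.norm.rpow_const fun _ => .inr (by linarith)).smul hf
  refine ⟨fun t ht => (u2 t ht).sub (v2 t ht), ⟨Bu + Bv, fun t ht x => ⟨?_, ?_, ?_⟩⟩,
    fun t ht => ?_, fun t ht x => ?_, fun t ht x => ?_⟩
  · exact norm_sub_le_of_le (hBu t ht x).1 (hBv t ht x).1
  · rw [hderiv t ht]
    exact norm_sub_le_of_le (hBu t ht x).2.1 (hBv t ht x).2.1
  · rw [hderiv2 t ht]
    exact norm_sub_le_of_le (hBu t ht x).2.2 (hBv t ht x).2.2
  · have hcu := (u2 t ht).continuous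
    have hcv := (v2 t ht).continuous
    exact (hcu.sub hcv).sub (continuous_const.mul ((hreaction hcu).sub (hreaction hcv)))
  · refine (norm_sub_le_of_le le_rfl <| (norm_mul_le _ _).trans <| mul_le_mul_of_nonneg_left
      (norm_norm_rpow_smul_sub_le (by linarith) (huR x t ht) (hvR x t ht))
      (norm_nonneg _)).trans_eq ?_
    rw [reactionConst]
    ring
  · refine ((ut x t ht).sub (vt x t ht)).congr_deriv ?_
    rw [hderiv2 t ht, ContinuousLinearMap.mul_apply', Complex.real_smul, Complex.real_smul]
    ring

lemma normSq_eq_inner_one_add_I_mul (α : ℝ) (z : ℂ) :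
    inner ℝ z ((1 + Complex.I * α) * z) = ‖z‖ ^ 2 := by
  rw [Complex.inner, ← Complex.normSq_eq_norm_sq, mul_assoc, Complex.mul_conj]
  simp

lemma sechNormSq_le_mul_sq {E : Type*} [NormedAddCommGroup E] {c ε R : ℝ} {f : ℝ → E} (hε : 0 < ε)
    (hfR : ∀ x, ‖f x‖ ≤ 2 * R) (hfε : ∀ x, |x - c| ≤ 2 * Real.log (1 / ε) → ‖f x‖ ≤ 2 * ε) :
    sechNormSq c f ≤ 16 * (1 + R ^ 2) * ε ^ 2 := by
  have hexp : Real.exp (-(2 * Real.log (1 / ε))) = ε ^ 2 := by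
    rw [one_div, Real.log_inv, mul_neg, neg_neg, ← Nat.cast_two, ← Real.log_pow,
      Real.exp_log (pow_pos hε 2)]
  calc sechNormSq c f ≤ 4 * ((2 * ε) ^ 2 + (2 * R) ^ 2 * ε ^ 2) :=
        hexp ▸ integral_normSq_sechMeasure_le c hfR hfε
    _ = 16 * (1 + R ^ 2) * ε ^ 2 := by ring

lemma exists_smoothing_const (hq : 0 ≤ q) (α β R : ℝ) :
    ∃ D δ : ℝ, 0 < δ ∧ ∀ (g u v : ℝ → ℝ → ℂ) (ε c : ℝ), 0 < ε →
      IsGLSolution1D q α β g u → IsGLSolution1D q α β g v →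
      (∀ x, ∀ t ∈ Icc (0 : ℝ) 1, ‖u x t‖ ≤ R) → (∀ x, ∀ t ∈ Icc (0 : ℝ) 1, ‖v x t‖ ≤ R) →
      (∀ x, |x - c| ≤ 2 * Real.log (1 / ε) → ‖u x 0 - v x 0‖ ≤ 2 * ε) →
      ‖u c 1 - v c 1‖ ≤ D * ε ∧
        ∀ x ∈ Icc c (c + δ), ‖u x 1 - v x 1 - (u c 1 - v c 1)‖ ≤ ε / 2 := by
  set A := ContinuousLinearMap.mul ℝ ℂ (1 + Complex.I * α)
  set K := reactionConst q β R
  have hA : ∀ z, ‖z‖ ^ 2 ≤ inner ℝ z (A z) := fun z =>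
    (normSq_eq_inner_one_add_I_mul α z).ge
  set M := smoothingConst A K * (16 * (1 + R ^ 2)) with hM
  have hM0 : 0 < M := mul_pos (smoothingConst_pos A K) (by positivity)
  refine ⟨√(2 * M), min 1 (1 / (4 * M)), by positivity,
    fun g u v ε c hε hu hv huR hvR hclose => ?_⟩
  have h := isParabolicSolution_sub hq hu hv huR hvR
  have h0 : (0 : ℝ) ∈ Icc (0 : ℝ) 1 := left_mem_Icc.2 zero_le_one
  have hinit : smoothingConst A K * sechNormSq c (fun x => u x 0 - v x 0) ≤ M * ε ^ 2 := by
    have hsub : ∀ x, ‖u x 0 - v x 0‖ ≤ 2 * R := fun x =>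
      (norm_sub_le_of_le (huR x 0 h0) (hvR x 0 h0)).trans_eq (two_mul R).symm
    rw [hM, mul_assoc]
    exact mul_le_mul_of_nonneg_left (sechNormSq_le_mul_sq hε hsub hclose)
      (smoothingConst_pos A K).le
  refine ⟨?_, fun x hx => abs_le_of_sq_le_sq' ?_ (by positivity) |>.2⟩
  · rw [← Real.sqrt_sq hε.le, ← Real.sqrt_mul (by positivity)]
    exact Real.le_sqrt_of_sq_le (by linarith [h.normSq_one_le hA c])
  · have hx1 : x - c ≤ 1 := by linarith [hx.2, min_le_left 1 (1 / (4 * M))]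
    have hxM : x - c ≤ 1 / (4 * M) := by linarith [hx.2, min_le_right 1 (1 / (4 * M))]
    calc ‖u x 1 - v x 1 - (u c 1 - v c 1)‖ ^ 2
        ≤ (x - c) * (smoothingConst A K * sechNormSq c fun y => u y 0 - v y 0) :=
          h.normSq_one_sub_one_le hA ⟨hx.1, by linarith⟩
      _ ≤ (x - c) * (M * ε ^ 2) := mul_le_mul_of_nonneg_left hinit (sub_nonneg.2 hx.1)
      _ ≤ 1 / (4 * M) * (M * ε ^ 2) := mul_le_mul_of_nonneg_right hxM (by positivity)
      _ = (ε / 2) ^ 2 := by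
        field_simp
        norm_num

end GinzburgLandauDifference

section Covering

variable {X E ι κ : Type*} [NormedAddCommGroup E]

/-- The functions in `𝓕` can be covered by `N` sets whose diameter in the supremum norm on `I` is
at most `r`. The sets of the cover may contain functions outside `𝓕`. -/
def HasCover (N : ℕ) (I : Set X) (r : ℝ) (𝓕 : Set (X → E)) : Prop :=
  ∃ U : Fin N → Set (X → E), 𝓕 ⊆ ⋃ i, U i ∧
    ∀ i, ∀ f ∈ U i, ∀ f' ∈ U i, ∀ x ∈ I, ‖f x - f' x‖ ≤ r

lemma HasCover.exists_coloring {N : ℕ} {I : Set X} {r : ℝ} {h : ι → X → E}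
    (hcov : HasCover N I r (range h)) :
    ∃ c : ι → Fin N, ∀ i j, c i = c j → ∀ x ∈ I, ‖h i x - h j x‖ ≤ r := by
  obtain ⟨U, hsub, hU⟩ := hcov
  choose c hc using fun i => mem_iUnion.1 (hsub (mem_range_self i))
  exact ⟨c, fun i j hij => hU (c i) _ (hc i) _ (hij ▸ hc j)⟩

lemma hasCover_range_of_coloring [Fintype κ] {I : Set X} {r : ℝ} {h : ι → X → E} (c : ι → κ)
    (hc : ∀ i j, c i = c j → ∀ x ∈ I, ‖h i x - h j x‖ ≤ r) :
    HasCover (Fintype.card κ) I r (range h) := by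
  let e := Fintype.equivFin κ
  refine ⟨fun k => h '' (c ⁻¹' {e.symm k}), ?_, ?_⟩
  · rintro _ ⟨i, rfl⟩
    exact mem_iUnion.2 ⟨e (c i), i, (e.symm_apply_apply _).symm, rfl⟩
  · rintro k _ ⟨i, hi, rfl⟩ _ ⟨j, hj, rfl⟩
    exact hc i j (hi.trans hj.symm)

lemma exists_coloring_closedBall [ProperSpace E] (r : ℝ) {η : ℝ} (hη : 0 < η) :
    ∃ (d : ℕ) (col : E → Fin d),
      ∀ y z, ‖y‖ ≤ r → ‖z‖ ≤ r → col y = col z → ‖y - z‖ ≤ η := by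
  obtain ⟨s, -, hs, hcov⟩ := (isCompact_closedBall (0 : E) r).finite_cover_balls (half_pos hη)
  have : Finite s := hs
  have hcenter : ∀ z : E, ∃ p : Option s, ‖z‖ ≤ r → ∃ y, p = some y ∧ dist z y < η / 2 := by
    intro z
    by_cases hz : ‖z‖ ≤ r
    · obtain ⟨y, hy, hzy⟩ := mem_iUnion₂.1 (hcov (mem_closedBall_zero_iff.2 hz))
      exact ⟨some ⟨y, hy⟩, fun _ => ⟨_, rfl, hzy⟩⟩
    · exact ⟨none, fun h => absurd h hz⟩
  choose center hcenter using hcenter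
  refine ⟨Nat.card (Option s), fun z => Finite.equivFin _ (center z), fun y z hy hz hyz => ?_⟩
  obtain ⟨p, hp, hyp⟩ := hcenter y hy
  obtain ⟨p', hp', hzp⟩ := hcenter z hz
  obtain rfl : p = p' :=
    Option.some_injective _ (hp ▸ hp' ▸ (Finite.equivFin _).injective hyz)
  rw [← dist_eq_norm]
  linarith [dist_triangle_right y z (p : E)]

variable [NormedSpace ℝ E] {d : ℕ} {col : E → Fin d} {D η ε : ℝ}

lemma exists_refined_coloring
    (hcol : ∀ y z, ‖y‖ ≤ D → ‖z‖ ≤ D → col y = col z → ‖y - z‖ ≤ η) (hε : 0 < ε) {h : ι → E}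
    {c : ι → κ} (hc : ∀ i j, c i = c j → ‖h i - h j‖ ≤ D * ε) :
    ∃ c' : ι → Fin d, ∀ i j, c i = c j → c' i = c' j → ‖h i - h j‖ ≤ η * ε := by
  let ref : ι → ι := fun i => rangeSplitting c ⟨c i, mem_range_self i⟩
  have href : ∀ i, c i = c (ref i) := fun i => (apply_rangeSplitting c ⟨c i, mem_range_self i⟩).symm
  have hscale : ∀ (z : E) (b : ℝ), ‖ε⁻¹ • z‖ ≤ b ↔ ‖z‖ ≤ b * ε := fun z b => by
    rw [norm_smul, norm_inv, Real.norm_of_nonneg hε.le, inv_mul_le_iff₀ hε, mul_comm]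
  refine ⟨fun i => col (ε⁻¹ • (h i - h (ref i))), fun i j hij hij' => ?_⟩
  have hdist := hcol _ _ ((hscale _ _).2 (hc _ _ (href i))) ((hscale _ _).2 (hc _ _ (href j))) hij'
  have heq : ref i = ref j := by simp only [ref, hij]
  rwa [← smul_sub, heq, sub_sub_sub_cancel_right, hscale] at hdist

lemma exists_grid {L δ : ℝ} (hL : 0 ≤ L) (hδ : 0 < δ) :
    ∃ p : Fin (⌊L / δ⌋₊ + 1) → ℝ, (∀ k, |p k| ≤ L / 2) ∧
      ∀ x, |x| ≤ L / 2 → ∃ k, x ∈ Icc (p k) (p k + δ) := by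
  refine ⟨fun k => -(L / 2) + k * δ, fun k => ?_, fun x hx => ?_⟩
  · have hk : (k : ℝ) * δ ≤ L := (le_div_iff₀ hδ).1
      ((Nat.cast_le.2 (Nat.lt_succ_iff.1 k.isLt)).trans (Nat.floor_le (by positivity)))
    have hk0 : 0 ≤ (k : ℝ) * δ := by positivity
    exact abs_le.2 ⟨by linarith, by linarith⟩
  · obtain ⟨hx1, hx2⟩ := abs_le.1 hx
    have hy : 0 ≤ (x + L / 2) / δ := div_nonneg (by linarith) hδ.le
    refine ⟨⟨⌊(x + L / 2) / δ⌋₊, Nat.lt_succ_of_le (Nat.floor_le_floor ?_)⟩, ?_, ?_⟩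
    · gcongr
      linarith
    · linarith [(le_div_iff₀ hδ).1 (Nat.floor_le hy)]
    · linarith [(div_lt_iff₀ hδ).1 (Nat.lt_floor_add_one ((x + L / 2) / δ))]

lemma exists_grid_coloring
    (hcol : ∀ y z, ‖y‖ ≤ D → ‖z‖ ≤ D → col y = col z → ‖y - z‖ ≤ 1 / 2) (hε : 0 < ε) {L δ : ℝ}
    (hL : 0 ≤ L) (hδ : 0 < δ) {h : ι → ℝ → E} {c : ι → κ}
    (hc : ∀ i j, c i = c j → ∀ p, |p| ≤ L / 2 → ‖h i p - h j p‖ ≤ D * ε ∧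
      ∀ x ∈ Icc p (p + δ), ‖h i x - h j x - (h i p - h j p)‖ ≤ ε / 2) :
    ∃ c' : ι → κ × (Fin (⌊L / δ⌋₊ + 1) → Fin d),
      ∀ i j, c' i = c' j → ∀ x, |x| ≤ L / 2 → ‖h i x - h j x‖ ≤ ε := by
  obtain ⟨p, hp, hgrid⟩ := exists_grid hL hδ
  choose c' hc' using fun k => exists_refined_coloring hcol hε (h := fun i => h i (p k))
    fun i j hij => (hc i j hij (p k) (hp k)).1
  refine ⟨fun i => (c i, fun k => c' k i), fun i j hij x hx => ?_⟩
  obtain ⟨hcij, hcij'⟩ := Prod.mk.inj hij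
  obtain ⟨k, hk⟩ := hgrid x hx
  have hpt := hc' k i j hcij (congrFun hcij' k)
  have hosc := (hc i j hcij (p k) (hp k)).2 x hk
  linarith [norm_le_norm_add_norm_sub' (h i x - h j x) (h i (p k) - h j (p k))]

end Covering

lemma natCast_pow_floor_add_one_le {d : ℕ} (hd : 1 ≤ d) {L δ : ℝ} (hL : 0 ≤ L) (hδ : 0 < δ) :
    (d : ℝ) ^ (⌊L / δ⌋₊ + 1) ≤ ((d : ℝ) ^ (1 / δ)) ^ L * d := by
  have hd' : (1 : ℝ) ≤ d := Nat.one_le_cast.2 hd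
  rw [pow_succ, ← Real.rpow_mul (by positivity), ← Real.rpow_natCast, one_div_mul_eq_div]
  gcongr
  exact Nat.floor_le (by positivity)

end GinzburgLandau

open GinzburgLandau in
theorem iterative_cover_bound_general {q : ℝ} (hq : 0 ≤ q) (α β R : ℝ) :
    ∃ A B : ℝ, 0 ≤ A ∧ 1 ≤ B ∧ ∀ ε : ℝ, 0 < ε → ∀ L : ℝ, 0 ≤ L → ∀ g : ℝ → ℝ → ℂ,
      ∀ S : Set (ℝ → ℝ → ℂ), (∀ u ∈ S, IsGLSolution1D q α β g u) →
      (∀ u ∈ S, ∀ x : ℝ, ∀ t ∈ Set.Icc (0 : ℝ) 1, ‖u x t‖ ≤ R) → ∀ N : ℕ,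
      HasCover N {x : ℝ | |x| ≤ (L + 4 * Real.log (1 / ε)) / 2} (2 * ε)
        ((fun u : ℝ → ℝ → ℂ => fun x => u x 0) '' S) →
      ∃ m : ℕ, (m : ℝ) ≤ N * A ^ L * B ∧
        HasCover m {x : ℝ | |x| ≤ L / 2} ε ((fun u : ℝ → ℝ → ℂ => fun x => u x 1) '' S) := by
  obtain ⟨D, δ, hδ, hsmooth⟩ := exists_smoothing_const hq α β R
  obtain ⟨d, col, hcol⟩ := exists_coloring_closedBall (E := ℂ) D one_half_pos
  refine ⟨(d : ℝ) ^ (1 / δ), d, by positivity, Nat.one_le_cast.2 (col 0).pos,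
    fun ε hε L hL g S hS hSR N hcov => ?_⟩
  rw [Set.image_eq_range] at hcov ⊢
  obtain ⟨c, hc⟩ := hcov.exists_coloring
  obtain ⟨c', hc'⟩ := exists_grid_coloring hcol hε hL hδ (h := fun u : S => fun x => u.1 x 1)
    fun u v huv p hp => hsmooth g u v ε p hε (hS u u.2) (hS v v.2) (hSR u u.2) (hSR v v.2)
      fun x hx => hc u v huv x <| show |x| ≤ _ by linarith [abs_sub_abs_le_abs_sub x p]
  refine ⟨_, ?_, hasCover_range_of_coloring c' hc'⟩
  simp only [Fintype.card_prod, Fintype.card_fun, Fintype.card_fin, Nat.cast_mul, Nat.cast_pow]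
  rw [mul_assoc]
  gcongr
  exact natCast_pow_floor_add_one_le (col 0).pos hL hδ

/-- Iterative covering bound (Lemma 6.1 of the paper): there are constants `A, B, C`
such that for all sufficiently small `ε > 0` and all `L > 0`, given a family `𝒮` of
classical solutions bounded by `R` with common forcing `g`, if the initial data
`{u(·,0)}` admit a cover by `N` sets of diameter `≤ 2ε` in sup norm on
`[−L''/2, L''/2]` with `L'' = L + C log(1/ε)`, then the time-one states `{u(·,1)}`
admit a cover by at most `N·A^L·B^{1/ε²}` sets of diameter `≤ ε` in sup norm on
`[−L/2, L/2]`. -/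
theorem iterative_cover_bound (q : ℝ) (hq : 1 / 2 < q) (α β : ℝ)
    (hβ : |β| ≤ Real.sqrt (2 * q + 1) / q) (R : ℝ) (hR : 1 < R) :
    ∃ A B C : ℝ, ∃ ε₀ : ℝ, 0 < ε₀ ∧ ∀ ε : ℝ, 0 < ε → ε ≤ ε₀ → ∀ L : ℝ, 0 < L →
      ∀ g : ℝ → ℝ → ℂ, (∃ Mg : ℝ, ∀ x t, ‖g x t‖ ≤ Mg) →
      ContinuousOn (fun p : ℝ × ℝ => g p.1 p.2) (Set.univ ×ˢ Set.Icc 0 1) →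
      ∀ S : Set (ℝ → ℝ → ℂ),
      (∀ u ∈ S, IsGLSolution1D q α β g u) →
      (∀ u ∈ S, ∀ x : ℝ, ∀ t ∈ Set.Icc (0 : ℝ) 1, ‖u x t‖ ≤ R) →
      ∀ N : ℕ,
      (∃ U : Fin N → Set (ℝ → ℂ),
        ((fun u : ℝ → ℝ → ℂ => fun x : ℝ => u x 0) '' S) ⊆ ⋃ i, U i ∧
        ∀ i, ∀ f ∈ U i, ∀ f' ∈ U i, ∀ x : ℝ,
          |x| ≤ (L + C * Real.log (1 / ε)) / 2 → ‖f x - f' x‖ ≤ 2 * ε) →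
      ∃ m : ℕ, (m : ℝ) ≤ (N : ℝ) * A ^ L * B ^ (1 / ε ^ 2) ∧
        ∃ V : Fin m → Set (ℝ → ℂ),
          ((fun u : ℝ → ℝ → ℂ => fun x : ℝ => u x 1) '' S) ⊆ ⋃ i, V i ∧
          ∀ i, ∀ f ∈ V i, ∀ f' ∈ V i, ∀ x : ℝ,
            |x| ≤ L / 2 → ‖f x - f' x‖ ≤ ε := by
  obtain ⟨A, B, hA, hB, h⟩ := iterative_cover_bound_general (by linarith : 0 ≤ q) α β R
  refine ⟨A, B, 4, 1, one_pos, fun ε hε hε1 L hL g _ _ S hS hSR N hcov => ?_⟩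
  obtain ⟨m, hm, hcov'⟩ := h ε hε L hL.le g S hS hSR N hcov
  have hexp : 1 ≤ 1 / ε ^ 2 := (one_le_div (by positivity)).2 (pow_le_one₀ hε.le hε1)
  exact ⟨m, hm.trans (by gcongr; exact Real.self_le_rpow_of_one_le hB hexp), hcov'⟩
end
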